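/- There exists a constant c_p > 0 depending only on p such that if the initial curvature satisfies ψ̂(0) ≥ c_p·‖ψ‖₂, then for every l ∈ ℕ there is a constant C_{p,l} > 0 (depending only on p, l and ψ) such that the normalized curvature satisfies ‖k̃(·,τ) − 1‖_{C^l[0,2π]} ≤ C_{p,l}·e^{−(3p−1)τ} for all τ ≥ 0. -/

import Mathlib

open Real MeasureTheory Filter Set

/-- The `n`-th Fourier coefficient of a `2π`-periodic function `f : ℝ → ℝ`:
`f̂(n) = (1/2π) ∫₀^{2π} f(θ) e^{-inθ} dθ`. -/
noncomputable def fCoeff (f : ℝ → ℝ) (n : ℤ) : ℂ :=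
  (1 / (2 * Real.pi)) * ∫ θ in (0:ℝ)..(2 * Real.pi),
    (f θ : ℂ) * Complex.exp (-(Complex.I * n * θ))

/-- The seminorm `‖f‖₂ = max{sup_n n²|Re f̂(n)|, sup_n n²|Im f̂(n)|}`. -/
noncomputable def seminorm2 (f : ℝ → ℝ) : ℝ :=
  max (⨆ n : ℤ, (n : ℝ)^2 * |(fCoeff f n).re|)
      (⨆ n : ℤ, (n : ℝ)^2 * |(fCoeff f n).im|)

/-- The `C^l[0,2π]` norm: `max_{0 ≤ j ≤ l} sup_{θ ∈ [0,2π]} |f^{(j)}(θ)|`. -/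
noncomputable def ClNorm (l : ℕ) (f : ℝ → ℝ) : ℝ :=
  ⨆ j : Fin (l + 1), ⨆ θ : Set.Icc (0:ℝ) (2 * Real.pi),
    |iteratedDeriv (j : ℕ) f (θ : ℝ)|

/-- `k : ℝ × [0,T) → ℝ` is a smooth, `2π`-periodic (in space), strictly positive solution of the
`p`-curve shortening equation
`∂k/∂t = k²(k^{p-1} ∂²k/∂θ² + (p-1) k^{p-2} (∂k/∂θ)² + (1/p) k^p)`
with initial datum `ψ` (smooth, strictly positive, `2π`-periodic), blow-up time `T`
(i.e. `sup_θ k(θ,t) → ∞` as `t → T⁻`), such that `k(·,t)` is the curvature of a simple closed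
convex curve for each `t`, i.e. `∫₀^{2π} e^{iθ}/k(θ,t) dθ = 0`. -/
def IsPCSF (p : ℕ) (T : ℝ) (k : ℝ → ℝ → ℝ) (ψ : ℝ → ℝ) : Prop :=
  ContDiffOn ℝ (⊤ : ℕ∞) (fun q : ℝ × ℝ => k q.1 q.2) (Set.univ ×ˢ Set.Ico 0 T) ∧
  (∀ θ t, k (θ + 2 * Real.pi) t = k θ t) ∧
  (∀ θ : ℝ, ∀ t ∈ Set.Ico (0:ℝ) T, 0 < k θ t) ∧
  (∀ θ : ℝ, ∀ t ∈ Set.Ico (0:ℝ) T,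
    HasDerivAt (fun s => k θ s)
      ((k θ t)^2 * ((k θ t)^(p - 1) * deriv (deriv (fun x => k x t)) θ
        + ((p : ℝ) - 1) * (k θ t)^(p - 2) * (deriv (fun x => k x t) θ)^2
        + (1 / (p : ℝ)) * (k θ t)^p)) t) ∧
  (∀ θ, k θ 0 = ψ θ) ∧
  ContDiff ℝ (⊤ : ℕ∞) ψ ∧ (∀ θ, 0 < ψ θ) ∧ (∀ θ, ψ (θ + 2 * Real.pi) = ψ θ) ∧
  Filter.Tendsto (fun t => ⨆ θ : Set.Icc (0:ℝ) (2 * Real.pi), k (θ : ℝ) t)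
    (nhdsWithin T (Set.Iio T)) Filter.atTop ∧
  (∀ t ∈ Set.Ico (0:ℝ) T,
    (∫ θ in (0:ℝ)..(2 * Real.pi), Complex.exp (Complex.I * θ) / (k θ t)) = 0)

/-- The original time `t` corresponding to the rescaled time `τ`:
`t = T(1 - e^{-(p+1)τ})`, i.e. `τ = -(1/(p+1))·log(1 - t/T)`. -/
noncomputable def tOf (p : ℕ) (T τ : ℝ) : ℝ := T * (1 - Real.exp (-((p : ℝ) + 1) * τ))

/-- The normalized curvature `k̃(θ,τ) = ((p+1)/p)^{1/(p+1)} (T-t)^{1/(p+1)} k(θ,t)`,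
with `t = T(1 - e^{-(p+1)τ})`. -/
noncomputable def ktilde (p : ℕ) (T : ℝ) (k : ℝ → ℝ → ℝ) (θ τ : ℝ) : ℝ :=
  (((p : ℝ) + 1) / (p : ℝ)) ^ ((1 : ℝ) / ((p : ℝ) + 1))
    * (T - tOf p T τ) ^ ((1 : ℝ) / ((p : ℝ) + 1)) * k θ (tOf p T τ)

/-!
In terms of the radius of curvature `ρ = 1 / k` the flow reads `∂ρ/∂t = -((kᵖ)'' + kᵖ) / p`. Write
`ρ = R (1 + u)` with `R` the mean of `ρ`. The closing condition says that `û(±1) = 0`, and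
`û(0) = 0` by the choice of `R`. Since `Rᵖ kᵖ = (1 + u)⁻ᵖ = 1 - p u + N` with `N` quadratic in `u`,
the mean satisfies `R' = -R⁻ᵖ (1 + N̂(0)) / p`, while up to the forcing `N` the mode `û(n)` evolves
like `R ^ (p (n² - 1) - 1)`. The slowest remaining modes, `n = ±2`, give the rate `R ^ (3 p - 1)`.

Smallness of `ψ̂(n)`, `n ≠ 0`, relative to `ψ̂(0)` makes `u` small initially, in the norm
`sup max(1, |n|)² |û(n)|`. This norm controls products, so `N` is small relative to `u`, and a
continuity argument keeps `u` small up to time `T`, with a first decay rate `R ^ (3 p / 2)`. Then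
`N` is of order `R ^ (3 p)` in every norm `sup max(1, |n|)ᵐ |N̂(n)|`, which is negligible against
`R ^ (3 p - 1)`, so that `u` decays at this sharp rate. Finally `R ^ (p + 1)` is asymptotic to
`(p + 1) / p * (T - t)`, so that `R` is comparable to `e ^ (-τ)`.
-/

open scoped Topology ContDiff

/-! ### Fourier coefficients of smooth periodic functions -/

/-- Smooth `2π`-periodic functions on the line, i.e. smooth functions on the circle. -/
structure SmoothPeriodic (f : ℝ → ℝ) : Prop where
  contDiff : ContDiff ℝ (⊤ : ℕ∞) f
  periodic : Function.Periodic f (2 * π)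

namespace SmoothPeriodic

variable {f g : ℝ → ℝ}

theorem continuous (hf : SmoothPeriodic f) : Continuous f := hf.contDiff.continuous

theorem deriv (hf : SmoothPeriodic f) : SmoothPeriodic (deriv f) where
  contDiff := (contDiff_infty_iff_deriv.1 hf.contDiff).2
  periodic x := by rw [← deriv_comp_add_const, hf.periodic.funext]

theorem iteratedDeriv (hf : SmoothPeriodic f) (j : ℕ) : SmoothPeriodic (iteratedDeriv j f) := by
  induction j with
  | zero => simpa using hf
  | succ j ih => rw [iteratedDeriv_succ]; exact ih.deriv

theorem one : SmoothPeriodic 1 := ⟨contDiff_const, fun _ => rfl⟩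

theorem add (hf : SmoothPeriodic f) (hg : SmoothPeriodic g) : SmoothPeriodic (f + g) :=
  ⟨hf.contDiff.add hg.contDiff, hf.periodic.add hg.periodic⟩

theorem sub (hf : SmoothPeriodic f) (hg : SmoothPeriodic g) : SmoothPeriodic (f - g) :=
  ⟨hf.contDiff.sub hg.contDiff, hf.periodic.sub hg.periodic⟩

theorem mul (hf : SmoothPeriodic f) (hg : SmoothPeriodic g) : SmoothPeriodic (f * g) :=
  ⟨hf.contDiff.mul hg.contDiff, hf.periodic.mul hg.periodic⟩

theorem const_smul (hf : SmoothPeriodic f) (c : ℝ) : SmoothPeriodic (c • f) :=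
  ⟨hf.contDiff.const_smul c, hf.periodic.smul c⟩

theorem pow (hf : SmoothPeriodic f) (j : ℕ) : SmoothPeriodic (f ^ j) :=
  ⟨hf.contDiff.pow j, fun x => by simp only [Pi.pow_apply, hf.periodic x]⟩

theorem inv (hf : SmoothPeriodic f) (h : ∀ x, f x ≠ 0) : SmoothPeriodic f⁻¹ :=
  ⟨hf.contDiff.inv h, fun x => by simp only [Pi.inv_apply, hf.periodic x]⟩

theorem exists_abs_le (hf : SmoothPeriodic f) : ∃ A, ∀ x, |f x| ≤ A := by
  obtain ⟨A, hA⟩ := isCompact_Icc.exists_bound_of_continuousOn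
    (hf.continuous.continuousOn (s := Icc 0 (2 * π)))
  refine ⟨A, fun x => ?_⟩
  obtain ⟨y, hy, hxy⟩ := hf.periodic.exists_mem_Ico₀ two_pi_pos x
  exact hxy ▸ hA y ⟨hy.1, hy.2.le⟩

end SmoothPeriodic

theorem fCoeff_eq_fourierCoeffOn (f : ℝ → ℝ) (n : ℤ) :
    fCoeff f n = fourierCoeffOn two_pi_pos (fun x => (f x : ℂ)) n := by
  rw [fourierCoeffOn_eq_integral, fCoeff, Complex.real_smul, sub_zero]
  push_cast
  congr 2
  ext θ
  rw [fourier_coe_apply, smul_eq_mul, mul_comm]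
  congr 2
  push_cast
  field_simp

theorem norm_exp_I_mul_int_mul (n : ℤ) (x : ℝ) : ‖Complex.exp (Complex.I * n * x)‖ = 1 := by
  rw [mul_assoc]
  exact_mod_cast Complex.norm_exp_I_mul_ofReal (n * x)

theorem norm_ofReal_mul_exp (r : ℝ) (n : ℤ) (x : ℝ) :
    ‖(r : ℂ) * Complex.exp (-(Complex.I * n * x))‖ = |r| := by
  have := norm_exp_I_mul_int_mul (-n) x
  push_cast [mul_neg, neg_mul] at this
  rw [norm_mul, this, mul_one, Complex.norm_real, norm_eq_abs]

theorem intervalIntegrable_mul_exp {f : ℝ → ℝ} (hf : Continuous f) (n : ℤ) (a b : ℝ) :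
    IntervalIntegrable (fun θ : ℝ => (f θ : ℂ) * Complex.exp (-(Complex.I * n * θ))) volume a b :=
  Continuous.intervalIntegrable (by fun_prop) _ _

section fCoeff

variable {f g : ℝ → ℝ}

theorem fCoeff_add (hf : Continuous f) (hg : Continuous g) (n : ℤ) :
    fCoeff (f + g) n = fCoeff f n + fCoeff g n := by
  simp only [fCoeff, Pi.add_apply, Complex.ofReal_add, add_mul]
  rw [intervalIntegral.integral_add (intervalIntegrable_mul_exp hf n _ _)
    (intervalIntegrable_mul_exp hg n _ _), mul_add]

theorem fCoeff_sub (hf : Continuous f) (hg : Continuous g) (n : ℤ) :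
    fCoeff (f - g) n = fCoeff f n - fCoeff g n := by
  simp only [fCoeff, Pi.sub_apply, Complex.ofReal_sub, sub_mul]
  rw [intervalIntegral.integral_sub (intervalIntegrable_mul_exp hf n _ _)
    (intervalIntegrable_mul_exp hg n _ _), mul_sub]

theorem fCoeff_const_smul (c : ℝ) (f : ℝ → ℝ) (n : ℤ) : fCoeff (c • f) n = c * fCoeff f n := by
  simp only [fCoeff, Pi.smul_apply, smul_eq_mul, Complex.ofReal_mul, mul_assoc]
  rw [intervalIntegral.integral_const_mul, mul_left_comm]

theorem fCoeff_deriv (hf : SmoothPeriodic f) (n : ℤ) :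
    fCoeff (deriv f) n = Complex.I * n * fCoeff f n := by
  have hderiv (x : ℝ) : HasDerivAt (fun x => (f x : ℂ)) ((deriv f x : ℝ) : ℂ) x :=
    ((hf.contDiff.differentiable (by simp)) x).hasDerivAt.ofReal_comp
  have hint : IntervalIntegrable (fun x => ((deriv f x : ℝ) : ℂ)) volume 0 (2 * π) :=
    (Complex.continuous_ofReal.comp hf.deriv.continuous).intervalIntegrable _ _
  have hends : f (2 * π) = f 0 := by simpa using hf.periodic 0
  rcases eq_or_ne n 0 with rfl | hn
  · have := intervalIntegral.integral_eq_sub_of_hasDerivAt (fun x _ => hderiv x) hint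
    simp [fCoeff, this, hends]
  · have hparts := fourierCoeffOn_of_hasDerivAt two_pi_pos hn (fun x _ => hderiv x) hint
    rw [hends, sub_self, mul_zero, ← fCoeff_eq_fourierCoeffOn, ← fCoeff_eq_fourierCoeffOn]
      at hparts
    have hn' : (n : ℂ) ≠ 0 := by exact_mod_cast hn
    have hπ : (π : ℂ) ≠ 0 := by exact_mod_cast pi_ne_zero
    rw [hparts]
    push_cast
    field_simp
    ring

theorem fCoeff_iteratedDeriv (hf : SmoothPeriodic f) (j : ℕ) (n : ℤ) :
    fCoeff (iteratedDeriv j f) n = (Complex.I * n) ^ j * fCoeff f n := by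
  induction j with
  | zero => simp
  | succ j ih => rw [iteratedDeriv_succ, fCoeff_deriv (hf.iteratedDeriv j), ih]; ring

theorem fCoeff_neg (f : ℝ → ℝ) (n : ℤ) :
    fCoeff f (-n) = (starRingEnd ℂ) (fCoeff f n) := by
  have hconj : (starRingEnd ℂ) (1 / (2 * π)) = 1 / (2 * π) := by
    simpa using Complex.conj_ofReal (1 / (2 * π))
  simp only [fCoeff, map_mul, hconj, intervalIntegral.integral_of_le two_pi_pos.le,
    ← integral_conj, ← Complex.exp_conj]
  simp

theorem fCoeff_zero (f : ℝ → ℝ) :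
    fCoeff f 0 = ((1 / (2 * π) * ∫ θ in (0 : ℝ)..(2 * π), f θ : ℝ) : ℂ) := by
  simp [fCoeff, intervalIntegral.integral_ofReal]

theorem fCoeff_one_zero : fCoeff 1 0 = 1 := by
  have : 1 / (2 * π) * (2 * π) = 1 := one_div_mul_cancel two_pi_pos.ne'
  rw [fCoeff_zero]
  simpa using congrArg Complex.ofReal this

theorem fCoeff_one_of_ne_zero {n : ℤ} (hn : n ≠ 0) : fCoeff 1 n = 0 := by
  have h := fCoeff_deriv SmoothPeriodic.one n
  have h0 : deriv (1 : ℝ → ℝ) = 0 := deriv_const' 1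
  rw [h0] at h
  simpa [fCoeff, hn] using h.symm

theorem norm_fCoeff_le {A : ℝ} (h : ∀ x, |f x| ≤ A) (n : ℤ) : ‖fCoeff f n‖ ≤ A := by
  have hint := intervalIntegral.norm_integral_le_of_norm_le_const (a := 0) (b := 2 * π) (C := A)
    (f := fun θ : ℝ => (f θ : ℂ) * Complex.exp (-(Complex.I * n * θ)))
    fun x _ => (norm_ofReal_mul_exp _ n x).trans_le (h x)
  have hnorm : ‖(1 / (2 * π) : ℂ)‖ = 1 / (2 * π) := by
    simp [abs_of_pos pi_pos]
  rw [sub_zero, abs_of_pos two_pi_pos] at hint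
  rw [fCoeff, norm_mul, hnorm, one_div_mul_eq_div, div_le_iff₀ two_pi_pos]
  exact hint

end fCoeff

/-! ### Weighted bounds on Fourier coefficients -/

/-- The weight `max(1, |n|)` of the frequency `n`. -/
noncomputable def freqWeight (n : ℤ) : ℝ := max 1 |(n : ℝ)|

theorem one_le_freqWeight (n : ℤ) : 1 ≤ freqWeight n := le_max_left _ _

theorem freqWeight_pos (n : ℤ) : 0 < freqWeight n := one_pos.trans_le (one_le_freqWeight n)

theorem freqWeight_zero : freqWeight 0 = 1 := by simp [freqWeight]

theorem freqWeight_of_ne_zero {n : ℤ} (hn : n ≠ 0) : freqWeight n = |(n : ℝ)| :=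
  max_eq_right (by exact_mod_cast Int.one_le_abs hn)

theorem freqWeight_le_add (n j : ℤ) : freqWeight n ≤ freqWeight j + freqWeight (n - j) := by
  refine max_le (by linarith [one_le_freqWeight j, one_le_freqWeight (n - j)]) ?_
  have : |(n : ℝ)| ≤ |(j : ℝ)| + |((n - j : ℤ) : ℝ)| := by
    simpa using abs_add_le (j : ℝ) ((n - j : ℤ) : ℝ)
  exact this.trans (add_le_add (le_max_right _ _) (le_max_right _ _))

theorem freqWeight_pow_le (m : ℕ) (n j : ℤ) :
    freqWeight n ^ m ≤ 2 ^ m * (freqWeight j ^ m + freqWeight (n - j) ^ m) := by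
  have hj := freqWeight_pos j
  have hnj := freqWeight_pos (n - j)
  have hmax : freqWeight n ≤ 2 * max (freqWeight j) (freqWeight (n - j)) := by
    linarith [freqWeight_le_add n j, le_max_left (freqWeight j) (freqWeight (n - j)),
      le_max_right (freqWeight j) (freqWeight (n - j))]
  calc freqWeight n ^ m ≤ (2 * max (freqWeight j) (freqWeight (n - j))) ^ m :=
        pow_le_pow_left₀ (freqWeight_pos n).le hmax m
    _ = 2 ^ m * max (freqWeight j) (freqWeight (n - j)) ^ m := mul_pow _ _ _
    _ ≤ 2 ^ m * (freqWeight j ^ m + freqWeight (n - j) ^ m) := by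
        gcongr
        rcases max_choice (freqWeight j) (freqWeight (n - j)) with h | h <;> rw [h]
        · exact le_add_of_nonneg_right (by positivity)
        · exact le_add_of_nonneg_left (by positivity)

theorem summable_one_div_freqWeight_sq : Summable fun n : ℤ => 1 / freqWeight n ^ 2 := by
  refine (Real.summable_one_div_int_pow.2 one_lt_two).congr_cofinite ?_
  filter_upwards [(Set.finite_singleton (0 : ℤ)).compl_mem_cofinite] with n hn
  rw [freqWeight_of_ne_zero hn, sq_abs]

/-- The constant `∑ₙ max(1, |n|)⁻²`. -/
noncomputable def weightSum : ℝ := ∑' n : ℤ, 1 / freqWeight n ^ 2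

theorem hasSum_weightSum : HasSum (fun n : ℤ => 1 / freqWeight n ^ 2) weightSum :=
  summable_one_div_freqWeight_sq.hasSum

theorem one_le_weightSum : 1 ≤ weightSum := by
  have := summable_one_div_freqWeight_sq.le_tsum 0 fun n _ => by
    have := freqWeight_pos n
    positivity
  simpa [freqWeight_zero, weightSum] using this

/-- `|f̂(n)| ≤ A · max(1, |n|)⁻ᵐ` for all `n`; this is the scale in which regularity is measured. -/
def FourierBound (m : ℕ) (f : ℝ → ℝ) (A : ℝ) : Prop :=
  ∀ n : ℤ, freqWeight n ^ m * ‖fCoeff f n‖ ≤ A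

namespace FourierBound

variable {m : ℕ} {f g : ℝ → ℝ} {A B : ℝ}

theorem norm_fCoeff_le (h : FourierBound m f A) (n : ℤ) :
    ‖fCoeff f n‖ ≤ A / freqWeight n ^ m := by
  rw [le_div_iff₀ (pow_pos (freqWeight_pos n) m), mul_comm]
  exact h n

theorem nonneg (h : FourierBound m f A) : 0 ≤ A :=
  (mul_nonneg (pow_nonneg (freqWeight_pos 0).le m) (norm_nonneg _)).trans (h 0)

theorem abs_re_fCoeff_zero_le (h : FourierBound m f A) : |(fCoeff f 0).re| ≤ A :=
  (Complex.abs_re_le_norm _).trans (by simpa [freqWeight_zero] using h 0)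

theorem mono (h : FourierBound m f A) (hAB : A ≤ B) : FourierBound m f B :=
  fun n => (h n).trans hAB

theorem of_le {j : ℕ} (h : FourierBound m f A) (hj : j ≤ m) : FourierBound j f A := fun n =>
  (mul_le_mul_of_nonneg_right (pow_le_pow_right₀ (one_le_freqWeight n) hj) (norm_nonneg _)).trans
    (h n)

theorem add (hf : Continuous f) (hg : Continuous g) (hA : FourierBound m f A)
    (hB : FourierBound m g B) : FourierBound m (f + g) (A + B) := fun n => by
  have := pow_nonneg (freqWeight_pos n).le m
  rw [fCoeff_add hf hg]
  calc freqWeight n ^ m * ‖fCoeff f n + fCoeff g n‖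
      ≤ freqWeight n ^ m * (‖fCoeff f n‖ + ‖fCoeff g n‖) := by gcongr; exact norm_add_le _ _
    _ ≤ A + B := by rw [mul_add]; exact add_le_add (hA n) (hB n)

theorem const_smul (hA : FourierBound m f A) (c : ℝ) : FourierBound m (c • f) (|c| * A) :=
  fun n => by
    rw [fCoeff_const_smul, norm_mul, Complex.norm_real, norm_eq_abs, mul_left_comm]
    exact mul_le_mul_of_nonneg_left (hA n) (abs_nonneg c)

theorem summable (h : FourierBound 2 f A) : Summable fun n => ‖fCoeff f n‖ :=
  (summable_one_div_freqWeight_sq.mul_left A).of_nonneg_of_le (fun _ => norm_nonneg _) fun n => by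
    simpa [div_eq_mul_inv] using h.norm_fCoeff_le n

theorem iteratedDeriv {j : ℕ} (hf : SmoothPeriodic f) (h : FourierBound (m + j) f A) :
    FourierBound m (iteratedDeriv j f) A := fun n => by
  rw [fCoeff_iteratedDeriv hf, norm_mul, norm_pow, norm_mul, Complex.norm_I, one_mul,
    Complex.norm_intCast]
  calc freqWeight n ^ m * (|(n : ℝ)| ^ j * ‖fCoeff f n‖)
      ≤ freqWeight n ^ m * (freqWeight n ^ j * ‖fCoeff f n‖) := by
        have := pow_nonneg (freqWeight_pos n).le m
        gcongr
        exact le_max_right _ _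
    _ = freqWeight n ^ (m + j) * ‖fCoeff f n‖ := by ring
    _ ≤ A := h n

theorem of_abs_le (hf : SmoothPeriodic f) (h0 : ∀ x, |f x| ≤ A)
    (hm : ∀ x, |_root_.iteratedDeriv m f x| ≤ A) : FourierBound m f A := fun n => by
  rcases eq_or_ne n 0 with rfl | hn
  · simpa [freqWeight_zero] using _root_.norm_fCoeff_le h0 0
  · have := _root_.norm_fCoeff_le hm n
    rwa [fCoeff_iteratedDeriv hf, norm_mul, norm_pow, norm_mul, Complex.norm_I, one_mul,
      Complex.norm_intCast, ← freqWeight_of_ne_zero hn] at this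

end FourierBound

theorem SmoothPeriodic.exists_fourierBound {f : ℝ → ℝ} (hf : SmoothPeriodic f) (m : ℕ) :
    ∃ A, FourierBound m f A := by
  obtain ⟨A, hA⟩ := hf.exists_abs_le
  obtain ⟨B, hB⟩ := (hf.iteratedDeriv m).exists_abs_le
  exact ⟨max A B, .of_abs_le hf (fun x => (hA x).trans (le_max_left _ _))
    fun x => (hB x).trans (le_max_right _ _)⟩

theorem SmoothPeriodic.hasSum_fCoeff {f : ℝ → ℝ} (hf : SmoothPeriodic f) (x : ℝ) :
    HasSum (fun n : ℤ => fCoeff f n * Complex.exp (Complex.I * n * x)) (f x : ℂ) := by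
  have : Fact (0 < 2 * π) := ⟨two_pi_pos⟩
  have hper : Function.Periodic (fun x => (f x : ℂ)) (2 * π) := fun x => by simp [hf.periodic x]
  let F : C(AddCircle (2 * π), ℂ) := ⟨hper.lift,
    continuous_coinduced_dom.2 (Complex.continuous_ofReal.comp hf.continuous)⟩
  have hF (x : ℝ) : F x = (f x : ℂ) := hper.lift_coe x
  have hcoeff : fourierCoeff F = fCoeff f := funext fun n => by
    rw [fCoeff_eq_fourierCoeffOn, fourierCoeff_eq_intervalIntegral _ _ 0,
      fourierCoeffOn_eq_integral]
    simp [hF]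
  obtain ⟨A, hA⟩ := hf.exists_fourierBound 2
  have hsum := has_pointwise_sum_fourier_series_of_summable
    (hcoeff ▸ hA.summable.of_norm) (x : AddCircle (2 * π))
  rw [hF, hcoeff] at hsum
  convert hsum using 2 with n
  rw [smul_eq_mul, fourier_coe_apply]
  congr 2
  push_cast
  field_simp

theorem FourierBound.abs_apply_le {f : ℝ → ℝ} {A : ℝ} (hf : SmoothPeriodic f)
    (h : FourierBound 2 f A) (x : ℝ) : |f x| ≤ A * weightSum := by
  have := tsum_of_norm_bounded (hasSum_weightSum.mul_left A)
    (f := fun n : ℤ => fCoeff f n * Complex.exp (Complex.I * n * x)) fun n => by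
      rw [norm_mul, norm_exp_I_mul_int_mul, mul_one]
      simpa [div_eq_mul_inv] using h.norm_fCoeff_le n
  rwa [(hf.hasSum_fCoeff x).tsum_eq, Complex.norm_real] at this

theorem hasSum_fCoeff_mul {f g : ℝ → ℝ} (hf : SmoothPeriodic f) (hg : SmoothPeriodic g) (n : ℤ) :
    HasSum (fun j : ℤ => fCoeff f j * fCoeff g (n - j)) (fCoeff (f * g) n) := by
  obtain ⟨A, hA⟩ := hf.exists_fourierBound 2
  obtain ⟨B, hB⟩ := hg.exists_abs_le
  have hgc := hg.continuous
  have hsum := intervalIntegral.hasSum_integral_of_dominated_convergence (μ := volume)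
    (a := 0) (b := 2 * π)
    (F := fun (j : ℤ) (θ : ℝ) => (fCoeff f j * Complex.exp (Complex.I * j * θ)) *
      ((g θ : ℂ) * Complex.exp (-(Complex.I * n * θ))))
    (fun j _ => ‖fCoeff f j‖ * B)
    (fun j => Continuous.aestronglyMeasurable (by fun_prop))
    (fun j => ae_of_all _ fun θ _ => by
      rw [norm_mul, norm_mul, norm_exp_I_mul_int_mul, norm_ofReal_mul_exp, mul_one]
      exact mul_le_mul_of_nonneg_left (hB θ) (norm_nonneg _))
    (ae_of_all _ fun θ _ => hA.summable.mul_right B) intervalIntegrable_const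
    (ae_of_all _ fun θ _ => (hf.hasSum_fCoeff θ).mul_right _)
  have hshift (j : ℤ) (θ : ℝ) : (fCoeff f j * Complex.exp (Complex.I * j * θ)) *
        ((g θ : ℂ) * Complex.exp (-(Complex.I * n * θ))) =
      fCoeff f j * ((g θ : ℂ) * Complex.exp (-(Complex.I * (n - j : ℤ) * θ))) := by
    have : -(Complex.I * ((n - j : ℤ) : ℂ) * θ) = Complex.I * j * θ + -(Complex.I * n * θ) := by
      push_cast; ring
    rw [this, Complex.exp_add]
    ring
  simp only [hshift, intervalIntegral.integral_const_mul] at hsum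
  have hscaled := hsum.mul_left ((1 : ℂ) / (2 * π))
  simp only [mul_left_comm _ (fCoeff f _), ← mul_assoc (f _ : ℂ), ← Complex.ofReal_mul] at hscaled
  exact hscaled

/-- The constant in the product estimate at level `m`. -/
noncomputable def convConst (m : ℕ) : ℝ := 2 ^ m * weightSum

theorem one_le_convConst (m : ℕ) : 1 ≤ convConst m :=
  one_le_mul_of_one_le_of_one_le (one_le_pow₀ one_le_two) one_le_weightSum

theorem convConst_mono : Monotone convConst := fun _ _ h =>
  mul_le_mul_of_nonneg_right (pow_le_pow_right₀ one_le_two h) (by linarith [one_le_weightSum])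

theorem FourierBound.mul {m : ℕ} {f g : ℝ → ℝ} {a A b B : ℝ} (hf : SmoothPeriodic f)
    (hg : SmoothPeriodic g) (ha : FourierBound 2 f a) (hA : FourierBound m f A)
    (hb : FourierBound 2 g b) (hB : FourierBound m g B) :
    FourierBound m (f * g) (convConst m * (A * b + a * B)) := fun n => by
  have hreflect : HasSum (fun j : ℤ => 1 / freqWeight (n - j) ^ 2) weightSum :=
    ((Equiv.subLeft n).hasSum_iff (f := fun j => 1 / freqWeight j ^ 2)).2 hasSum_weightSum
  have hterm (j : ℤ) : ‖((freqWeight n ^ m : ℝ) : ℂ) * (fCoeff f j * fCoeff g (n - j))‖ ≤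
      2 ^ m * (A * b * (1 / freqWeight (n - j) ^ 2) + a * B * (1 / freqWeight j ^ 2)) := by
    have := hA.nonneg
    have := hB.nonneg
    have := ha.nonneg
    have := freqWeight_pos j
    have := freqWeight_pos (n - j)
    rw [norm_mul, norm_mul, Complex.norm_of_nonneg (pow_nonneg (freqWeight_pos n).le m)]
    calc freqWeight n ^ m * (‖fCoeff f j‖ * ‖fCoeff g (n - j)‖)
        ≤ 2 ^ m * (freqWeight j ^ m + freqWeight (n - j) ^ m) *
            (‖fCoeff f j‖ * ‖fCoeff g (n - j)‖) := by gcongr; exact freqWeight_pow_le m n j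
      _ = 2 ^ m * ((freqWeight j ^ m * ‖fCoeff f j‖) * ‖fCoeff g (n - j)‖
            + ‖fCoeff f j‖ * (freqWeight (n - j) ^ m * ‖fCoeff g (n - j)‖)) := by ring
      _ ≤ 2 ^ m * (A * (b / freqWeight (n - j) ^ 2) + a / freqWeight j ^ 2 * B) := by
          gcongr
          exacts [hA j, hb.norm_fCoeff_le (n - j), ha.norm_fCoeff_le j, hB (n - j)]
      _ = _ := by ring
  have hsum := (hasSum_fCoeff_mul hf hg n).mul_left ((freqWeight n ^ m : ℝ) : ℂ)
  have hbound := tsum_of_norm_bounded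
    (((hreflect.mul_left (A * b)).add (hasSum_weightSum.mul_left (a * B))).mul_left (2 ^ m)) hterm
  rw [hsum.tsum_eq, norm_mul, Complex.norm_of_nonneg (pow_nonneg (freqWeight_pos n).le m)]
    at hbound
  exact hbound.trans_eq (by rw [convConst]; ring)

theorem le_of_self_improving {ι : Type*} {f : ι → ℝ} {φ : ℝ → ℝ} {D : ℝ}
    (hf : BddAbove (range f)) (himprove : ∀ M, (∀ i, f i ≤ M) → ∀ i, f i ≤ φ M)
    (hφ : ∀ M, M ≤ φ M → M ≤ D) (i : ι) : f i ≤ D := by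
  have : Nonempty ι := ⟨i⟩
  exact (le_ciSup hf i).trans (hφ _ (ciSup_le (himprove _ (le_ciSup hf))))

theorem FourierBound.of_self_improving {m : ℕ} {f : ℝ → ℝ} {φ : ℝ → ℝ} {D : ℝ}
    (hf : SmoothPeriodic f) (himprove : ∀ M, FourierBound m f M → FourierBound m f (φ M))
    (hφ : ∀ M, M ≤ φ M → M ≤ D) : FourierBound m f D := by
  obtain ⟨B, hB⟩ := hf.exists_fourierBound m
  exact le_of_self_improving ⟨B, forall_mem_range.2 hB⟩ himprove hφ

/-- The extra derivative makes all but finitely many frequencies negligible uniformly in `s`. -/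
theorem FourierBound.eventually_of_tendsto {ι : Type*} {l : Filter ι} {m : ℕ} {f : ι → ℝ → ℝ}
    {g : ℝ → ℝ} {A c c' : ℝ} (hf : ∀ᶠ s in l, FourierBound (m + 1) (f s) A)
    (hlim : ∀ n, Tendsto (fun s => fCoeff (f s) n) l (𝓝 (fCoeff g n)))
    (hg : FourierBound m g c) (hc : c < c') : ∀ᶠ s in l, FourierBound m (f s) c' := by
  have hc' : 0 < c' := hg.nonneg.trans_lt hc
  have hfin : {n : ℤ | freqWeight n < A / c'}.Finite := by
    refine (Set.finite_Icc (-⌈A / c'⌉) ⌈A / c'⌉).subset fun n hn => abs_le.1 ?_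
    have : ((|n| : ℤ) : ℝ) ≤ ⌈A / c'⌉ := by
      rw [Int.cast_abs]
      exact ((le_max_right _ _).trans hn.le).trans (Int.le_ceil _)
    exact_mod_cast this
  have hlow : ∀ᶠ s in l, ∀ n ∈ {n : ℤ | freqWeight n < A / c'},
      freqWeight n ^ m * ‖fCoeff (f s) n‖ ≤ c' := by
    refine (eventually_all_finite hfin).2 fun n _ => ?_
    exact (((hlim n).norm.const_mul _).eventually_lt_const ((hg n).trans_lt hc)).mono
      fun _ => le_of_lt
  filter_upwards [hf, hlow] with s hs hlow n
  rcases lt_or_ge (freqWeight n) (A / c') with hn | hn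
  · exact hlow n hn
  · have hbound := hs n
    rw [pow_succ'] at hbound
    rw [div_le_iff₀ hc'] at hn
    nlinarith [freqWeight_pos n]

/-! ### Inverses and powers of perturbations of `1` -/

/-- Control of `f` in a low norm by `a` and in a high norm by `A`; products are estimated so that
`A` enters linearly. -/
structure TameBound (m : ℕ) (f : ℝ → ℝ) (a A : ℝ) : Prop where
  low : FourierBound 2 f a
  high : FourierBound m f A

namespace TameBound

variable {m : ℕ} {f g : ℝ → ℝ} {a A b B : ℝ}

theorem mono (h : TameBound m f a A) (hab : a ≤ b) (hAB : A ≤ B) : TameBound m f b B :=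
  ⟨h.low.mono hab, h.high.mono hAB⟩

theorem add (hf : SmoothPeriodic f) (hg : SmoothPeriodic g) (h : TameBound m f a A)
    (h' : TameBound m g b B) : TameBound m (f + g) (a + b) (A + B) :=
  ⟨h.low.add hf.continuous hg.continuous h'.low, h.high.add hf.continuous hg.continuous h'.high⟩

theorem const_smul (h : TameBound m f a A) (c : ℝ) : TameBound m (c • f) (|c| * a) (|c| * A) :=
  ⟨h.low.const_smul c, h.high.const_smul c⟩

theorem mul (hm : 2 ≤ m) (hf : SmoothPeriodic f) (hg : SmoothPeriodic g) (h : TameBound m f a A)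
    (h' : TameBound m g b B) :
    TameBound m (f * g) (convConst m * (2 * a * b)) (convConst m * (A * b + a * B)) := by
  refine ⟨(FourierBound.mul hf hg h.low h.low h'.low h'.low).mono ?_,
    FourierBound.mul hf hg h.low h.high h'.low h'.high⟩
  have := mul_nonneg h.low.nonneg h'.low.nonneg
  calc convConst 2 * (a * b + a * b) ≤ convConst m * (a * b + a * b) := by
        gcongr; exact convConst_mono hm
    _ = convConst m * (2 * a * b) := by ring

end TameBound

section Inverse

variable {m : ℕ} {u y : ℝ → ℝ} {a A : ℝ}

theorem eq_neg_add_neg_mul_of_one_add_mul_one_add (h : (1 + u) * (1 + y) = 1) :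
    y = (-1 : ℝ) • u + (-1 : ℝ) • (u * y) := by
  simp only [neg_smul, one_smul]
  linear_combination h

theorem FourierBound.inverse (hu : SmoothPeriodic u) (hy : SmoothPeriodic y)
    (h : (1 + u) * (1 + y) = 1) (ha : FourierBound 2 u a) (hsmall : 4 * convConst 2 * a ≤ 1) :
    FourierBound 2 y (2 * a) := by
  refine FourierBound.of_self_improving hy (φ := fun M => a + convConst 2 * (a * M + a * M))
    (fun M hM => ?_) fun M hM => ?_
  · have hsum := (ha.const_smul (-1)).add (hu.const_smul _).continuous
      ((hu.mul hy).const_smul _).continuous ((FourierBound.mul hu hy ha ha hM hM).const_smul (-1))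
    rw [← eq_neg_add_neg_mul_of_one_add_mul_one_add h] at hsum
    simpa using hsum
  · by_contra! hlt
    nlinarith [ha.nonneg]

theorem TameBound.inverse (hm : 2 ≤ m) (hu : SmoothPeriodic u) (hy : SmoothPeriodic y)
    (h : (1 + u) * (1 + y) = 1) (ha : TameBound m u a A) (hsmall : 4 * convConst m * a ≤ 1) :
    TameBound m y (2 * a) (4 * A) := by
  have ha0 := ha.low.nonneg
  have hA0 := ha.high.nonneg
  have hlow : FourierBound 2 y (2 * a) := ha.low.inverse hu hy h
    (hsmall.trans' (by gcongr; exact convConst_mono hm))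
  refine ⟨hlow, FourierBound.of_self_improving hy
    (φ := fun M => A + convConst m * (A * (2 * a) + a * M)) (fun M hM => ?_) fun M hM => ?_⟩
  · have hsum := (ha.high.const_smul (-1)).add (hu.const_smul _).continuous
      ((hu.mul hy).const_smul _).continuous
      ((FourierBound.mul hu hy ha.low ha.high hlow hM).const_smul (-1))
    rw [← eq_neg_add_neg_mul_of_one_add_mul_one_add h] at hsum
    simpa using hsum
  · by_contra! hlt
    nlinarith

/-- If `(1 + u)(1 + y) = 1`, this is the part of `(1 + y)ᵖ = (1 + u)⁻ᵖ` beyond its linearization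
`1 - p u`. -/
def powRemainder (p : ℕ) (u y : ℝ → ℝ) : ℝ → ℝ := (1 + y) ^ p - 1 + (p : ℝ) • u

theorem SmoothPeriodic.powRemainder (hu : SmoothPeriodic u) (hy : SmoothPeriodic y) (p : ℕ) :
    SmoothPeriodic (powRemainder p u y) :=
  (((one.add hy).pow p).sub one).add (hu.const_smul p)

theorem powRemainder_succ (h : (1 + u) * (1 + y) = 1) (p : ℕ) :
    powRemainder (p + 1) u y =
      powRemainder p u y + (powRemainder p u y * y + (-(p + 1 : ℝ)) • (u * y)) := by
  ext x
  have hx : (1 + u x) * (1 + y x) = 1 := congrFun h x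
  simp only [powRemainder, Pi.add_apply, Pi.sub_apply, Pi.mul_apply, Pi.pow_apply, Pi.one_apply,
    Pi.smul_apply, smul_eq_mul, pow_succ]
  push_cast
  linear_combination hx

theorem exists_tameBound_powRemainder {m : ℕ} (hm : 2 ≤ m) (p : ℕ) :
    ∃ C : ℝ, 0 ≤ C ∧ ∀ {u y : ℝ → ℝ}, SmoothPeriodic u → SmoothPeriodic y →
      (1 + u) * (1 + y) = 1 → ∀ {a A : ℝ}, TameBound m u a A → 4 * convConst m * a ≤ 1 →
      TameBound m (powRemainder p u y) (C * a * a) (C * a * A) := by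
  have hK := one_le_convConst m
  induction p with
  | zero =>
    refine ⟨0, le_rfl, fun _ _ _ _ _ _ _ => ?_⟩
    have hzero (u y : ℝ → ℝ) : powRemainder 0 u y = 0 := by simp [powRemainder]
    constructor <;> intro n <;> simp [hzero, fCoeff]
  | succ p ih =>
    obtain ⟨C, hC, ih⟩ := ih
    refine ⟨3 * C + 6 * (p + 1) * convConst m, by positivity, ?_⟩
    intro u y hu hy h a A ha hsmall
    have ha0 := ha.low.nonneg
    have hA0 := ha.high.nonneg
    have hbound := ih hu hy h ha hsmall
    have hN := hu.powRemainder hy p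
    have hinv := ha.inverse hm hu hy h hsmall
    rw [powRemainder_succ h]
    refine (hbound.add hN ((hN.mul hy).add ((hu.mul hy).const_smul _))
      ((hbound.mul hm hN hy hinv).add (hN.mul hy) ((hu.mul hy).const_smul _)
        ((ha.mul hm hu hy hinv).const_smul _))).mono ?_ ?_ <;>
      rw [abs_neg, abs_of_nonneg (by positivity)]
    · have : 4 * convConst m * a * (C * a * a) ≤ 1 * (C * a * a) := by gcongr
      have : 0 ≤ (p + 1) * convConst m * (a * a) := by positivity
      have : 0 ≤ C * (a * a) := by positivity
      linarith
    · have : 4 * convConst m * a * (C * a * A) ≤ 1 * (C * a * A) := by gcongr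
      have : 0 ≤ C * (a * A) := by positivity
      linarith

end Inverse

/-! ### Smooth families and differential inequalities -/

/-- A family `g t`, `t ∈ [0, T)`, of `2π`-periodic functions that is smooth in time and space
jointly (up to and including the initial time). -/
structure JointlySmooth (T : ℝ) (g : ℝ → ℝ → ℝ) : Prop where
  contDiffOn : ContDiffOn ℝ (⊤ : ℕ∞) (fun q : ℝ × ℝ => g q.2 q.1) (univ ×ˢ Ico 0 T)
  periodic : ∀ t ∈ Ico 0 T, Function.Periodic (g t) (2 * π)

namespace JointlySmooth

variable {T : ℝ} {g h : ℝ → ℝ → ℝ}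

theorem smoothPeriodic (hg : JointlySmooth T g) {t : ℝ} (ht : t ∈ Ico 0 T) :
    SmoothPeriodic (g t) := by
  refine ⟨?_, hg.periodic t ht⟩
  rw [← contDiffOn_univ]
  exact hg.contDiffOn.comp (f := fun x : ℝ => (x, t)) (by fun_prop) fun x _ => ⟨mem_univ _, ht⟩

theorem deriv (hg : JointlySmooth T g) : JointlySmooth T fun t => deriv (g t) := by
  refine ⟨?_, fun t ht => (hg.smoothPeriodic ht).deriv.periodic⟩
  have hunique : UniqueDiffOn ℝ ((univ : Set ℝ) ×ˢ Ico 0 T) :=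
    uniqueDiffOn_univ.prod (uniqueDiffOn_Ico 0 T)
  have hpartial : ContDiffOn ℝ (⊤ : ℕ∞) (fun q => fderivWithin ℝ (fun q : ℝ × ℝ => g q.2 q.1)
      (univ ×ˢ Ico 0 T) q ((1 : ℝ), (0 : ℝ))) (univ ×ˢ Ico 0 T) :=
    (hg.contDiffOn.fderivWithin hunique (m := (⊤ : ℕ∞)) (by simp)).clm_apply contDiffOn_const
  refine hpartial.congr fun q hq => HasDerivAt.deriv ?_
  have hslice : HasDerivWithinAt (fun x : ℝ => (x, q.2)) ((1 : ℝ), (0 : ℝ)) univ q.1 :=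
    ((hasDerivAt_id q.1).prodMk (hasDerivAt_const q.1 q.2)).hasDerivWithinAt
  rw [← hasDerivWithinAt_univ]
  exact HasFDerivWithinAt.comp_hasDerivWithinAt (l := fun q : ℝ × ℝ => g q.2 q.1)
    (f := fun x : ℝ => (x, q.2)) q.1
    ((hg.contDiffOn.differentiableOn (by simp)) q hq).hasFDerivWithinAt hslice
    fun x _ => ⟨mem_univ _, hq.2⟩

theorem iteratedDeriv (hg : JointlySmooth T g) (j : ℕ) :
    JointlySmooth T fun t => iteratedDeriv j (g t) := by
  induction j with
  | zero => simpa using hg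
  | succ j ih => simpa only [iteratedDeriv_succ] using ih.deriv

theorem inv (hg : JointlySmooth T g) (h : ∀ t ∈ Ico 0 T, ∀ x, g t x ≠ 0) :
    JointlySmooth T fun t => (g t)⁻¹ :=
  ⟨hg.contDiffOn.inv fun q hq => h q.2 hq.2 q.1,
    fun _ ht => ((hg.smoothPeriodic ht).inv (h _ ht)).periodic⟩

theorem pow (hg : JointlySmooth T g) (j : ℕ) : JointlySmooth T fun t => g t ^ j :=
  ⟨hg.contDiffOn.pow j, fun _ ht => ((hg.smoothPeriodic ht).pow j).periodic⟩

theorem add (hg : JointlySmooth T g) (hh : JointlySmooth T h) :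
    JointlySmooth T fun t => g t + h t :=
  ⟨hg.contDiffOn.add hh.contDiffOn,
    fun _ ht => ((hg.smoothPeriodic ht).add (hh.smoothPeriodic ht)).periodic⟩

theorem const_smul (hg : JointlySmooth T g) (c : ℝ) : JointlySmooth T fun t => c • g t :=
  ⟨hg.contDiffOn.const_smul c, fun _ ht => ((hg.smoothPeriodic ht).const_smul c).periodic⟩

theorem continuousOn_time (hg : JointlySmooth T g) (x : ℝ) :
    ContinuousOn (fun t => g t x) (Ico 0 T) :=
  hg.contDiffOn.continuousOn.comp (f := fun t : ℝ => (x, t)) (by fun_prop)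
    fun _ ht => ⟨mem_univ _, ht⟩

theorem exists_abs_le (hg : JointlySmooth T g) {t₁ : ℝ} (ht₁ : t₁ < T) :
    ∃ A, ∀ t ∈ Icc 0 t₁, ∀ x, |g t x| ≤ A := by
  have hsub : Icc (0 : ℝ) (2 * π) ×ˢ Icc 0 t₁ ⊆ univ ×ˢ Ico 0 T := fun q hq =>
    ⟨mem_univ _, hq.2.1, hq.2.2.trans_lt ht₁⟩
  obtain ⟨A, hA⟩ := (isCompact_Icc.prod isCompact_Icc).exists_bound_of_continuousOn
    (hg.contDiffOn.continuousOn.mono hsub)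
  refine ⟨A, fun t ht x => ?_⟩
  obtain ⟨z, hz, hxz⟩ := (hg.periodic t ⟨ht.1, ht.2.trans_lt ht₁⟩).exists_mem_Ico₀ two_pi_pos x
  exact hxz ▸ hA (z, t) ⟨⟨hz.1, hz.2.le⟩, ht⟩

theorem exists_fourierBound (hg : JointlySmooth T g) (m : ℕ) {t₁ : ℝ} (ht₁ : t₁ < T) :
    ∃ A, ∀ t ∈ Icc 0 t₁, FourierBound m (g t) A := by
  obtain ⟨A, hA⟩ := hg.exists_abs_le ht₁
  obtain ⟨B, hB⟩ := (hg.iteratedDeriv m).exists_abs_le ht₁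
  exact ⟨max A B, fun t ht => .of_abs_le (hg.smoothPeriodic ⟨ht.1, ht.2.trans_lt ht₁⟩)
    (fun x => (hA t ht x).trans (le_max_left _ _)) fun x => (hB t ht x).trans (le_max_right _ _)⟩

theorem continuousOn_fCoeff (hg : JointlySmooth T g) (n : ℤ) :
    ContinuousOn (fun t => fCoeff (g t) n) (Ico 0 T) := by
  intro t ht
  have hmid : t < (t + T) / 2 := by linarith [ht.2]
  obtain ⟨A, hA⟩ := hg.exists_abs_le (t₁ := (t + T) / 2) (by linarith [ht.2])
  refine continuousWithinAt_const.mul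
    (intervalIntegral.continuousWithinAt_of_dominated_interval (bound := fun _ => A) ?_ ?_
      (by simp) ?_)
  · filter_upwards [self_mem_nhdsWithin] with s hs
    have := (hg.smoothPeriodic hs).continuous
    exact Continuous.aestronglyMeasurable (by fun_prop)
  · filter_upwards [self_mem_nhdsWithin, nhdsWithin_le_nhds (Iio_mem_nhds hmid)] with s hs hs'
    refine .of_forall fun x _ => ?_
    rw [norm_ofReal_mul_exp]
    exact hA s ⟨hs.1, le_of_lt hs'⟩ x
  · refine .of_forall fun x _ => ContinuousWithinAt.mul ?_ continuousWithinAt_const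
    exact Complex.continuous_ofReal.continuousAt.comp_continuousWithinAt
      (hg.continuousOn_time x t ht)

theorem hasDerivAt_fCoeff (hg : JointlySmooth T g) (hh : JointlySmooth T h)
    (hgh : ∀ t ∈ Ioo 0 T, ∀ x, HasDerivAt (fun s => g s x) (h t x) t) (n : ℤ) {t : ℝ}
    (ht : t ∈ Ioo 0 T) : HasDerivAt (fun s => fCoeff (g s) n) (fCoeff (h t) n) t := by
  have htT := ht.2
  have hmid : (t + T) / 2 < T := by linarith
  obtain ⟨A, hA⟩ := hh.exists_abs_le hmid
  refine ((intervalIntegral.hasDerivAt_integral_of_dominated_loc_of_deriv_le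
    (bound := fun _ => A) (F := fun t x => (g t x : ℂ) * Complex.exp (-(Complex.I * n * x)))
    (F' := fun t x => (h t x : ℂ) * Complex.exp (-(Complex.I * n * x)))
    (s := Ioo 0 ((t + T) / 2)) (Ioo_mem_nhds ht.1 (by linarith)) ?_ ?_ ?_ ?_
    intervalIntegrable_const ?_).2).const_mul _
  · filter_upwards [Ioo_mem_nhds ht.1 ht.2] with s hs
    have := (hg.smoothPeriodic (Ioo_subset_Ico_self hs)).continuous
    exact Continuous.aestronglyMeasurable (by fun_prop)
  · exact intervalIntegrable_mul_exp (hg.smoothPeriodic (Ioo_subset_Ico_self ht)).continuous n _ _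
  · have := (hh.smoothPeriodic (Ioo_subset_Ico_self ht)).continuous
    exact Continuous.aestronglyMeasurable (by fun_prop)
  · refine .of_forall fun x _ s hs => ?_
    rw [norm_ofReal_mul_exp]
    exact hA s (Ioo_subset_Icc_self hs) x
  · exact .of_forall fun x _ s hs =>
      (hgh s ⟨hs.1, hs.2.trans hmid⟩ x).ofReal_comp.mul_const _

theorem hasDerivWithinAt_fCoeff (hg : JointlySmooth T g) (hh : JointlySmooth T h)
    (hgh : ∀ t ∈ Ioo 0 T, ∀ x, HasDerivAt (fun s => g s x) (h t x) t) (n : ℤ) {t : ℝ}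
    (ht : t ∈ Ico 0 T) :
    HasDerivWithinAt (fun s => fCoeff (g s) n) (fCoeff (h t) n) (Ici t) t := by
  have hinterior {s : ℝ} (hs : s ∈ Ioo t T) := hg.hasDerivAt_fCoeff hh hgh n
    (t := s) ⟨ht.1.trans_lt hs.1, hs.2⟩
  have hsub : Ioo t T ⊆ Ico 0 T := fun s hs => ⟨ht.1.trans hs.1.le, hs.2⟩
  refine hasDerivWithinAt_Ici_of_tendsto_deriv (s := Ioo t T)
    (fun s hs => (hinterior hs).differentiableAt.differentiableWithinAt)
    ((hg.continuousOn_fCoeff n t ht).mono hsub) (Ioo_mem_nhdsGT ht.2) ?_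
  refine (((hh.continuousOn_fCoeff n t ht).mono hsub).tendsto).congr' ?_ |>.mono_left
    (nhdsWithin_Ioo_eq_nhdsGT ht.2).ge
  filter_upwards [self_mem_nhdsWithin] with s hs using (hinterior hs).deriv.symm

end JointlySmooth

theorem exists_hasDerivAt_of_continuousOn_Icc {σ : ℝ → ℝ} {a b : ℝ}
    (hσ : ContinuousOn σ (Icc a b)) : ∃ S : ℝ → ℝ, ∀ t ∈ Icc a b, HasDerivAt S (σ t) t := by
  rcases lt_or_ge b a with hab | hab
  · exact ⟨0, fun t ht => absurd (ht.1.trans ht.2) hab.not_ge⟩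
  have hext : Continuous (IccExtend hab ((Icc a b).domRestrict σ)) :=
    hσ.domRestrict.Icc_extend'
  refine ⟨fun t => ∫ s in a..t, IccExtend hab ((Icc a b).domRestrict σ) s, fun t ht => ?_⟩
  exact (hext.integral_hasStrictDerivAt a t).hasDerivAt.congr_deriv (IccExtend_of_mem hab _ ht)

theorem norm_le_of_linear_ode {t₀ t₁ a : ℝ} {σ B B' : ℝ → ℝ} {x b : ℝ → ℂ}
    (hx : ContinuousOn x (Icc t₀ t₁))
    (hx' : ∀ t ∈ Ico t₀ t₁, HasDerivWithinAt x (σ t * (-(a : ℂ) * x t + b t)) (Ici t) t)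
    (hB : ContinuousOn B (Icc t₀ t₁)) (hB' : ∀ t ∈ Ico t₀ t₁, HasDerivWithinAt B (B' t) (Ici t) t)
    (hσ : ContinuousOn σ (Icc t₀ t₁)) (hσ0 : ∀ t ∈ Ico t₀ t₁, 0 ≤ σ t)
    (hle : ∀ t ∈ Ico t₀ t₁, σ t * (-a * B t + ‖b t‖) ≤ B' t) (h₀ : ‖x t₀‖ ≤ B t₀) :
    ∀ t ∈ Icc t₀ t₁, ‖x t‖ ≤ B t := by
  obtain ⟨S, hS⟩ := exists_hasDerivAt_of_continuousOn_Icc hσ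
  set E : ℝ → ℝ := fun t => exp (a * S t)
  have hE0 (t : ℝ) : 0 < E t := exp_pos _
  have hE (t : ℝ) (ht : t ∈ Icc t₀ t₁) : HasDerivAt E (E t * (a * σ t)) t :=
    ((hS t ht).const_mul a).exp
  have hEc : ContinuousOn E (Icc t₀ t₁) := fun t ht => (hE t ht).continuousAt.continuousWithinAt
  have hnorm (t : ℝ) : ‖(E t : ℂ) * x t‖ = E t * ‖x t‖ := by
    rw [norm_mul, Complex.norm_of_nonneg (hE0 t).le]
  have hEx : ∀ t ∈ Ico t₀ t₁, HasDerivWithinAt (fun t => (E t : ℂ) * x t)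
      (((E t * σ t : ℝ) : ℂ) * b t) (Ici t) t := fun t ht =>
    ((hE t (Ico_subset_Icc_self ht)).ofReal_comp.hasDerivWithinAt.mul (hx' t ht)).congr_deriv
      (by push_cast; ring)
  have hEB : ∀ t ∈ Ico t₀ t₁, HasDerivWithinAt (fun t => E t * B t)
      (E t * (a * σ t) * B t + E t * B' t) (Ici t) t := fun t ht =>
    (hE t (Ico_subset_Icc_self ht)).hasDerivWithinAt.mul (hB' t ht)
  have hslope : ∀ t ∈ Ico t₀ t₁,
      ‖((E t * σ t : ℝ) : ℂ) * b t‖ ≤ E t * (a * σ t) * B t + E t * B' t := fun t ht => by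
    rw [norm_mul, Complex.norm_of_nonneg (mul_nonneg (hE0 t).le (hσ0 t ht))]
    linarith [mul_le_mul_of_nonneg_left (hle t ht) (hE0 t).le]
  intro t ht
  have := image_norm_le_of_norm_deriv_right_le_deriv_boundary'
    (f := fun t => (E t : ℂ) * x t) (B := fun t => E t * B t)
    ((Complex.continuous_ofReal.comp_continuousOn hEc).mul hx) hEx
    (by rw [hnorm]; exact mul_le_mul_of_nonneg_left h₀ (hE0 t₀).le)
    (hEc.mul hB) hEB hslope ht
  rw [hnorm] at this
  exact le_of_mul_le_mul_left this (hE0 t)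

/-! ### Evolution of the radius of curvature -/

/-- The radius of curvature `ρ = 1 / k` at time `t`, as a function of the tangent angle. -/
noncomputable def radius (k : ℝ → ℝ → ℝ) (t : ℝ) : ℝ → ℝ := (flip k t)⁻¹

/-- The mean `R` of the radius of curvature over the tangent angle. -/
noncomputable def meanRadius (k : ℝ → ℝ → ℝ) (t : ℝ) : ℝ := (fCoeff (radius k t) 0).re

/-- The relative deviation `u` of the radius of curvature from its mean: `ρ = R (1 + u)`. -/
noncomputable def radiusDev (k : ℝ → ℝ → ℝ) (t : ℝ) : ℝ → ℝ :=
  (meanRadius k t)⁻¹ • radius k t - 1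

/-- The deviation `y` of the curvature from that of the circle of radius `R`: `k = (1 + y) / R`. -/
noncomputable def curvDev (k : ℝ → ℝ → ℝ) (t : ℝ) : ℝ → ℝ := meanRadius k t • flip k t - 1

/-- The part of `(R k) ^ p` that is quadratic in the deviation: `(R k) ^ p = 1 - p u + N`. -/
noncomputable def forcing (p : ℕ) (k : ℝ → ℝ → ℝ) (t : ℝ) : ℝ → ℝ :=
  powRemainder p (radiusDev k t) (curvDev k t)

/-- The time derivative of the radius of curvature prescribed by the flow. -/
noncomputable def radiusVelocity (p : ℕ) (k : ℝ → ℝ → ℝ) (t : ℝ) : ℝ → ℝ :=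
  (-(1 / p) : ℝ) • (deriv (deriv (flip k t ^ p)) + flip k t ^ p)

theorem ofReal_meanRadius (k : ℝ → ℝ → ℝ) (t : ℝ) :
    (meanRadius k t : ℂ) = fCoeff (radius k t) 0 := by
  rw [meanRadius, fCoeff_zero, Complex.ofReal_re]

theorem deriv_deriv_pow {f : ℝ → ℝ} (hf : ContDiff ℝ 2 f) {p : ℕ} (hp : 1 ≤ p) (x : ℝ) :
    deriv (deriv (f ^ p)) x =
      p * (f x ^ (p - 1) * deriv (deriv f) x + (p - 1) * f x ^ (p - 2) * deriv f x ^ 2) := by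
  have hf₁ (z : ℝ) : HasDerivAt f (deriv f z) z :=
    (hf.differentiable (by simp) z).hasDerivAt
  have hf₂ : HasDerivAt (deriv f) (deriv (deriv f) x) x :=
    (hf.differentiable_deriv_two x).hasDerivAt
  have hpow : deriv (f ^ p) = (p : ℝ) • (f ^ (p - 1) * deriv f) := by
    ext z
    simpa [mul_assoc] using ((hf₁ z).pow p).deriv
  rw [hpow, ((((hf₁ x).pow (p - 1)).mul hf₂).const_smul (p : ℝ)).deriv, Nat.cast_sub hp,
    show p - 1 - 1 = p - 2 by lia, smul_eq_mul, Pi.pow_apply]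
  push_cast
  ring

namespace IsPCSF

variable {p : ℕ} {T : ℝ} {k : ℝ → ℝ → ℝ} {ψ : ℝ → ℝ} {t : ℝ}

theorem curv_pos (H : IsPCSF p T k ψ) (ht : t ∈ Ico 0 T) (x : ℝ) : 0 < k x t :=
  H.2.2.1 x t ht

theorem jointlySmooth_curv (H : IsPCSF p T k ψ) : JointlySmooth T (flip k) :=
  ⟨H.1, fun t _ x => H.2.1 x t⟩

theorem jointlySmooth_radius (H : IsPCSF p T k ψ) : JointlySmooth T (radius k) :=
  H.jointlySmooth_curv.inv fun _ ht x => (H.curv_pos ht x).ne'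

theorem meanRadius_pos (H : IsPCSF p T k ψ) (ht : t ∈ Ico 0 T) : 0 < meanRadius k t := by
  rw [meanRadius, fCoeff_zero, Complex.ofReal_re]
  have hcont := (H.jointlySmooth_radius.smoothPeriodic ht).continuous
  refine mul_pos (by positivity) ?_
  exact intervalIntegral.intervalIntegral_pos_of_pos_on (hcont.intervalIntegrable _ _)
    (fun x _ => inv_pos.2 (H.curv_pos ht x)) two_pi_pos

theorem smoothPeriodic_radiusDev (H : IsPCSF p T k ψ) (ht : t ∈ Ico 0 T) :
    SmoothPeriodic (radiusDev k t) :=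
  ((H.jointlySmooth_radius.smoothPeriodic ht).const_smul _).sub .one

theorem smoothPeriodic_curvDev (H : IsPCSF p T k ψ) (ht : t ∈ Ico 0 T) :
    SmoothPeriodic (curvDev k t) :=
  ((H.jointlySmooth_curv.smoothPeriodic ht).const_smul _).sub .one

theorem smoothPeriodic_forcing (H : IsPCSF p T k ψ) (ht : t ∈ Ico 0 T) :
    SmoothPeriodic (forcing p k t) :=
  (H.smoothPeriodic_radiusDev ht).powRemainder (H.smoothPeriodic_curvDev ht) p

theorem one_add_radiusDev_mul_one_add_curvDev (H : IsPCSF p T k ψ) (ht : t ∈ Ico 0 T) :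
    (1 + radiusDev k t) * (1 + curvDev k t) = 1 := by
  ext x
  have hR := (H.meanRadius_pos ht).ne'
  have hk := (H.curv_pos ht x).ne'
  simp only [radiusDev, curvDev, radius, flip, Pi.mul_apply, Pi.add_apply, Pi.sub_apply,
    Pi.smul_apply, Pi.inv_apply, Pi.one_apply, smul_eq_mul]
  field_simp
  ring

theorem fCoeff_radius (H : IsPCSF p T k ψ) (ht : t ∈ Ico 0 T) {n : ℤ} (hn : n ≠ 0) :
    fCoeff (radius k t) n = meanRadius k t * fCoeff (radiusDev k t) n := by
  have hcont := (H.jointlySmooth_radius.smoothPeriodic ht).const_smul (meanRadius k t)⁻¹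
  have hR : (meanRadius k t : ℂ) ≠ 0 := by exact_mod_cast (H.meanRadius_pos ht).ne'
  rw [radiusDev, fCoeff_sub hcont.continuous SmoothPeriodic.one.continuous, fCoeff_const_smul,
    fCoeff_one_of_ne_zero hn, sub_zero, Complex.ofReal_inv, mul_inv_cancel_left₀ hR]

theorem fCoeff_radiusDev_zero (H : IsPCSF p T k ψ) (ht : t ∈ Ico 0 T) :
    fCoeff (radiusDev k t) 0 = 0 := by
  have hcont := (H.jointlySmooth_radius.smoothPeriodic ht).const_smul (meanRadius k t)⁻¹
  have hR : (meanRadius k t : ℂ) ≠ 0 := by exact_mod_cast (H.meanRadius_pos ht).ne'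
  rw [radiusDev, fCoeff_sub hcont.continuous SmoothPeriodic.one.continuous, fCoeff_const_smul,
    fCoeff_one_zero, ← ofReal_meanRadius, Complex.ofReal_inv, inv_mul_cancel₀ hR, sub_self]

theorem fCoeff_radius_neg_one (H : IsPCSF p T k ψ) (ht : t ∈ Ico 0 T) :
    fCoeff (radius k t) (-1) = 0 := by
  rw [fCoeff, mul_eq_zero_of_right]
  rw [← H.2.2.2.2.2.2.2.2.2 t ht]
  congr with θ
  simp [radius, flip, div_eq_inv_mul]

theorem fCoeff_radiusDev_eq_zero (H : IsPCSF p T k ψ) (ht : t ∈ Ico 0 T) {n : ℤ} (hn : |n| ≤ 1) :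
    fCoeff (radiusDev k t) n = 0 := by
  have hR : (meanRadius k t : ℂ) ≠ 0 := by exact_mod_cast (H.meanRadius_pos ht).ne'
  have hneg : fCoeff (radiusDev k t) (-1) = 0 := by
    have := H.fCoeff_radius_neg_one ht
    rw [H.fCoeff_radius ht (by norm_num)] at this
    exact (mul_eq_zero.1 this).resolve_left hR
  obtain rfl | rfl | rfl : n = -1 ∨ n = 0 ∨ n = 1 := by rw [abs_le] at hn; lia
  · exact hneg
  · exact H.fCoeff_radiusDev_zero ht
  · simpa [hneg] using fCoeff_neg (radiusDev k t) (-1)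

theorem hasDerivAt_radius (hp : 1 ≤ p) (H : IsPCSF p T k ψ) (ht : t ∈ Ico 0 T) (x : ℝ) :
    HasDerivAt (fun s => radius k s x) (radiusVelocity p k t x) t := by
  have hk := (H.curv_pos ht x).ne'
  have hp0 : (p : ℝ) ≠ 0 := by positivity
  refine ((H.2.2.2.1 x t ht).inv hk).congr_deriv ?_
  have hpow := deriv_deriv_pow
    ((H.jointlySmooth_curv.smoothPeriodic ht).contDiff.of_le (by norm_cast)) hp x
  have hcurv : (fun x => k x t) = flip k t := rfl
  rw [neg_div, mul_div_cancel_left₀ _ (pow_ne_zero 2 hk), hcurv]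
  simp only [radiusVelocity, Pi.smul_apply, Pi.add_apply, Pi.pow_apply, smul_eq_mul, hpow]
  simp only [flip]
  field_simp

theorem jointlySmooth_radiusVelocity (H : IsPCSF p T k ψ) :
    JointlySmooth T (radiusVelocity p k) :=
  ((H.jointlySmooth_curv.pow p).deriv.deriv.add (H.jointlySmooth_curv.pow p)).const_smul _

theorem fCoeff_radiusVelocity (H : IsPCSF p T k ψ) (ht : t ∈ Ico 0 T) (n : ℤ) :
    fCoeff (radiusVelocity p k t) n = (n ^ 2 - 1) / p * fCoeff (flip k t ^ p) n := by
  have hsmooth := (H.jointlySmooth_curv.smoothPeriodic ht).pow p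
  rw [radiusVelocity, fCoeff_const_smul, fCoeff_add hsmooth.deriv.deriv.continuous
    hsmooth.continuous, fCoeff_deriv hsmooth.deriv, fCoeff_deriv hsmooth]
  push_cast
  linear_combination (-(n : ℂ) ^ 2 / p * fCoeff (flip k t ^ p) n) * Complex.I_sq

theorem curv_pow_eq (H : IsPCSF p T k ψ) (ht : t ∈ Ico 0 T) :
    flip k t ^ p = (meanRadius k t ^ p)⁻¹ • (1 - (p : ℝ) • radiusDev k t + forcing p k t) := by
  have hR := (H.meanRadius_pos ht).ne'
  have hcurv : (1 + curvDev k t) ^ p = meanRadius k t ^ p • flip k t ^ p := by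
    rw [curvDev, add_sub_cancel, smul_pow]
  rw [forcing, powRemainder, hcurv, eq_inv_smul_iff₀ (pow_ne_zero p hR)]
  ring

theorem fCoeff_curv_pow (H : IsPCSF p T k ψ) (ht : t ∈ Ico 0 T) (n : ℤ) :
    fCoeff (flip k t ^ p) n = ((meanRadius k t ^ p)⁻¹ : ℝ) *
      (fCoeff 1 n - p * fCoeff (radiusDev k t) n + fCoeff (forcing p k t) n) := by
  have hpu := (H.smoothPeriodic_radiusDev ht).const_smul p
  rw [H.curv_pow_eq ht, fCoeff_const_smul, fCoeff_add (SmoothPeriodic.one.sub hpu).continuous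
      (H.smoothPeriodic_forcing ht).continuous,
    fCoeff_sub SmoothPeriodic.one.continuous hpu.continuous, fCoeff_const_smul,
    Complex.ofReal_natCast]

theorem hasDerivWithinAt_fCoeff_radius (hp : 1 ≤ p) (H : IsPCSF p T k ψ) (ht : t ∈ Ico 0 T)
    (n : ℤ) : HasDerivWithinAt (fun s => fCoeff (radius k s) n)
      ((n ^ 2 - 1) / p * (((meanRadius k t ^ p)⁻¹ : ℝ) *
        (fCoeff 1 n - p * fCoeff (radiusDev k t) n + fCoeff (forcing p k t) n))) (Ici t) t := by
  rw [← H.fCoeff_curv_pow ht, ← H.fCoeff_radiusVelocity ht]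
  exact H.jointlySmooth_radius.hasDerivWithinAt_fCoeff H.jointlySmooth_radiusVelocity
    (fun s hs => H.hasDerivAt_radius hp (Ioo_subset_Ico_self hs)) n ht

theorem hasDerivWithinAt_meanRadius (hp : 1 ≤ p) (H : IsPCSF p T k ψ) (ht : t ∈ Ico 0 T) :
    HasDerivWithinAt (meanRadius k)
      (-((meanRadius k t ^ p)⁻¹ * (1 + (fCoeff (forcing p k t) 0).re) / p)) (Ici t) t := by
  have hcoeff := H.hasDerivWithinAt_fCoeff_radius hp ht 0
  rw [H.fCoeff_radiusDev_zero ht, fCoeff_one_zero] at hcoeff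
  refine (Complex.reCLM.hasFDerivAt.comp_hasDerivWithinAt t hcoeff).congr_deriv ?_
  rw [show ((0 : ℤ) ^ 2 - 1 : ℂ) / p = ((-(1 / p) : ℝ) : ℂ) by push_cast; ring, Complex.reCLM_apply,
    Complex.re_ofReal_mul, Complex.re_ofReal_mul, mul_zero, sub_zero, Complex.add_re,
    Complex.one_re]
  ring

/-- In the time scale of the shrinking circle, the `n`-th mode is damped at the rate `n² - 1`. -/
theorem hasDerivWithinAt_fCoeff_radius_of_ne_zero (hp : 1 ≤ p) (H : IsPCSF p T k ψ)
    (ht : t ∈ Ico 0 T) {n : ℤ} (hn : n ≠ 0) : HasDerivWithinAt (fun s => fCoeff (radius k s) n)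
      (((meanRadius k t ^ (p + 1))⁻¹ : ℝ) * (-((n ^ 2 - 1 : ℝ) : ℂ) * fCoeff (radius k t) n +
        ((n ^ 2 - 1) * meanRadius k t / p : ℝ) * fCoeff (forcing p k t) n)) (Ici t) t := by
  refine (H.hasDerivWithinAt_fCoeff_radius hp ht n).congr_deriv ?_
  have hR : (meanRadius k t : ℂ) ≠ 0 := by exact_mod_cast (H.meanRadius_pos ht).ne'
  have hp0 : (p : ℂ) ≠ 0 := by exact_mod_cast (by lia : p ≠ 0)
  rw [H.fCoeff_radius ht hn, fCoeff_one_of_ne_zero hn, pow_succ]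
  push_cast
  field_simp
  ring

theorem continuousOn_meanRadius (H : IsPCSF p T k ψ) : ContinuousOn (meanRadius k) (Ico 0 T) :=
  Complex.continuous_re.comp_continuousOn (H.jointlySmooth_radius.continuousOn_fCoeff 0)

end IsPCSF

/-! ### Barriers for the Fourier modes -/

theorem three_le_sq_sub_one {n : ℤ} (hn : 1 < |n|) : (3 : ℝ) ≤ (n : ℝ) ^ 2 - 1 := by
  have : (2 : ℝ) ≤ |(n : ℝ)| := by exact_mod_cast hn
  nlinarith [sq_abs (n : ℝ)]

theorem exists_tameBound_forcing {m : ℕ} (hm : 2 ≤ m) (p : ℕ) :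
    ∃ ε > 0, 4 * convConst m * ε ≤ 1 ∧ ∀ {T : ℝ} {k : ℝ → ℝ → ℝ} {ψ : ℝ → ℝ}, IsPCSF p T k ψ →
      ∀ {t : ℝ}, t ∈ Ico 0 T → ∀ {A : ℝ}, TameBound m (radiusDev k t) ε A →
        TameBound m (forcing p k t) (1 / 20) (1 / 20 * A) := by
  obtain ⟨C, hC, hforcing⟩ := exists_tameBound_powRemainder hm p
  have hK := one_le_convConst m
  set ε : ℝ := 1 / (20 * (C + 1) + 4 * convConst m)
  have hε : 0 < ε := by positivity
  have hCε : C * ε ≤ 1 / 20 := by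
    rw [mul_one_div, div_le_div_iff₀ (by positivity) (by norm_num)]
    linarith
  have hKε : 4 * convConst m * ε ≤ 1 := by
    rw [mul_one_div, div_le_one (by positivity)]
    linarith
  have hε1 : ε ≤ 1 := by nlinarith
  refine ⟨ε, hε, hKε, fun H t ht A h => ?_⟩
  refine (hforcing (H.smoothPeriodic_radiusDev ht) (H.smoothPeriodic_curvDev ht)
    (H.one_add_radiusDev_mul_one_add_curvDev ht) h hKε).mono ?_ ?_
  · exact (mul_le_of_le_one_right (by positivity) hε1).trans hCε
  · exact mul_le_mul_of_nonneg_right hCε h.high.nonneg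

namespace IsPCSF

variable {p m : ℕ} {T : ℝ} {k : ℝ → ℝ → ℝ} {ψ : ℝ → ℝ} {t₀ t₁ : ℝ}

theorem norm_fCoeff_radius (H : IsPCSF p T k ψ) {t : ℝ} (ht : t ∈ Ico 0 T) {n : ℤ} (hn : n ≠ 0) :
    ‖fCoeff (radius k t) n‖ = meanRadius k t * ‖fCoeff (radiusDev k t) n‖ := by
  rw [H.fCoeff_radius ht hn, norm_mul, Complex.norm_of_nonneg (H.meanRadius_pos ht).le]

theorem hasDerivWithinAt_meanRadius_mul_comp (hp : 1 ≤ p) (H : IsPCSF p T k ψ) {t : ℝ}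
    (ht : t ∈ Ico 0 T) {φ : ℝ → ℝ} {φ' : ℝ} (hφ : HasDerivAt φ φ' (meanRadius k t)) :
    HasDerivWithinAt (fun s => meanRadius k s * φ (meanRadius k s))
      (-((meanRadius k t ^ p)⁻¹ * ((1 + (fCoeff (forcing p k t) 0).re) / p *
        (φ (meanRadius k t) + meanRadius k t * φ')))) (Ici t) t := by
  have hR := H.hasDerivWithinAt_meanRadius hp ht
  exact (hR.mul (hφ.comp_hasDerivWithinAt t hR)).congr_deriv (by rw [Function.comp_apply]; ring)

/-- The hypothesis `hle` says that `r ↦ r * φ r`, evaluated along the mean radius, is a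
supersolution of the equation of the `n`-th mode. -/
theorem norm_fCoeff_radiusDev_le_of_barrier (hp : 1 ≤ p) (H : IsPCSF p T k ψ) (h0 : 0 ≤ t₀)
    (h1 : t₁ < T) {n : ℤ} (hn : n ≠ 0) {φ φ' : ℝ → ℝ}
    (hφ : ∀ r, 0 < r → HasDerivAt φ (φ' r) r)
    (hle : ∀ t ∈ Ico t₀ t₁, (1 + (fCoeff (forcing p k t) 0).re) / p *
        (φ (meanRadius k t) + meanRadius k t * φ' (meanRadius k t)) ≤
      (n ^ 2 - 1) * (φ (meanRadius k t) - ‖fCoeff (forcing p k t) n‖ / p))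
    (h₀ : ‖fCoeff (radiusDev k t₀) n‖ ≤ φ (meanRadius k t₀)) :
    ∀ t ∈ Icc t₀ t₁, ‖fCoeff (radiusDev k t) n‖ ≤ φ (meanRadius k t) := by
  have hsub : Icc t₀ t₁ ⊆ Ico 0 T := fun t ht => ⟨h0.trans ht.1, ht.2.trans_lt h1⟩
  have hsub' : Ico t₀ t₁ ⊆ Ico 0 T := Ico_subset_Icc_self.trans hsub
  have hR {t : ℝ} (ht : t ∈ Icc t₀ t₁) := H.meanRadius_pos (hsub ht)
  have hRc : ContinuousOn (meanRadius k) (Icc t₀ t₁) := H.continuousOn_meanRadius.mono hsub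
  have hφc : ContinuousOn (fun t => φ (meanRadius k t)) (Icc t₀ t₁) := fun t ht =>
    (hφ _ (hR ht)).continuousAt.comp_continuousWithinAt (hRc t ht)
  have ha : (0 : ℝ) ≤ (n : ℝ) ^ 2 - 1 := by
    rw [sub_nonneg, one_le_sq_iff_one_le_abs]
    exact_mod_cast Int.one_le_abs hn
  intro t ht
  have hmode := norm_le_of_linear_ode (a := n ^ 2 - 1)
    (B := fun t => meanRadius k t * φ (meanRadius k t))
    ((H.jointlySmooth_radius.continuousOn_fCoeff n).mono hsub)
    (fun t ht => H.hasDerivWithinAt_fCoeff_radius_of_ne_zero hp (hsub' ht) hn) (hRc.mul hφc)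
    (fun t ht => H.hasDerivWithinAt_meanRadius_mul_comp hp (hsub' ht)
      (hφ _ (H.meanRadius_pos (hsub' ht))))
    ((hRc.pow (p + 1)).inv₀ fun t ht => pow_ne_zero _ (hR ht).ne')
    (fun t ht => inv_nonneg.2 (pow_nonneg (H.meanRadius_pos (hsub' ht)).le _))
    (fun t ht => ?_) ?_ t ht
  · rw [H.norm_fCoeff_radius (hsub ht) hn] at hmode
    exact le_of_mul_le_mul_left hmode (hR ht)
  · have hRt := H.meanRadius_pos (hsub' ht)
    have := mul_le_mul_of_nonneg_left (hle t ht) (inv_nonneg.2 (pow_nonneg hRt.le p))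
    rw [norm_mul, Complex.norm_of_nonneg (by positivity), pow_succ]
    refine le_of_eq_of_le ?_ (neg_le_neg this)
    field_simp
    ring
  · have ht₀ : t₀ ∈ Icc t₀ t₁ := ⟨le_rfl, ht.1.trans ht.2⟩
    rw [H.norm_fCoeff_radius (hsub ht₀) hn]
    exact mul_le_mul_of_nonneg_left h₀ (hR ht₀).le

/-- The exponent is limited by `n ^ 2 - 1 ≥ 3`: the linear equation alone would give the rate
`R ^ (3 * p - 1)`. -/
theorem norm_fCoeff_radiusDev_le_rpow (hp : 1 ≤ p) (H : IsPCSF p T k ψ) (h0 : 0 ≤ t₀)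
    (h1 : t₁ < T) {n : ℤ} (hn : 1 < |n|) {E : ℝ} (hE : 0 ≤ E)
    (hmean : ∀ t ∈ Icc t₀ t₁, |(fCoeff (forcing p k t) 0).re| ≤ 1 / 20)
    (hforcing : ∀ t ∈ Icc t₀ t₁,
      ‖fCoeff (forcing p k t) n‖ ≤ E * meanRadius k t ^ (3 / 2 * p : ℝ) / 10)
    (h₀ : ‖fCoeff (radiusDev k t₀) n‖ ≤ E * meanRadius k t₀ ^ (3 / 2 * p : ℝ)) :
    ∀ t ∈ Icc t₀ t₁, ‖fCoeff (radiusDev k t) n‖ ≤ E * meanRadius k t ^ (3 / 2 * p : ℝ) := by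
  refine H.norm_fCoeff_radiusDev_le_of_barrier hp h0 h1 (by rintro rfl; simp at hn)
    (φ := fun r => E * r ^ (3 / 2 * p : ℝ))
    (fun r hr => (hasDerivAt_rpow_const (.inl hr.ne')).const_mul E) (fun t ht => ?_) h₀
  have hR := H.meanRadius_pos ⟨h0.trans ht.1, ht.2.trans h1⟩
  have hmean := (abs_le.1 (hmean t (Ico_subset_Icc_self ht))).2
  have hforcing := hforcing t (Ico_subset_Icc_self ht)
  have hp1 : (1 : ℝ) ≤ p := by exact_mod_cast hp
  set B := E * meanRadius k t ^ (3 / 2 * p : ℝ) with hB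
  have hB0 : 0 ≤ B := by positivity
  have hbarrier : B + meanRadius k t * (E * (3 / 2 * p * meanRadius k t ^ (3 / 2 * p - 1 : ℝ))) =
      (1 + 3 / 2 * p) * B := by
    rw [hB, rpow_sub_one hR.ne']
    field_simp
  have hrate : (1 + (fCoeff (forcing p k t) 0).re) / p * (1 + 3 / 2 * p) ≤ 21 / 8 := by
    rw [div_mul_eq_mul_div, div_le_iff₀ (by positivity)]
    nlinarith
  have hfrac : ‖fCoeff (forcing p k t) n‖ / p ≤ B / 10 :=
    (div_le_self (norm_nonneg _) hp1).trans hforcing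
  rw [hbarrier, ← mul_assoc]
  nlinarith [three_le_sq_sub_one hn]

theorem exists_fourierBound_radiusDev (H : IsPCSF p T k ψ) (m : ℕ) (h1 : t₁ < T) :
    ∃ A, ∀ t ∈ Icc 0 t₁, FourierBound m (radiusDev k t) A := by
  obtain ⟨A, hA⟩ := H.jointlySmooth_radius.exists_fourierBound m h1
  have hsub : Icc 0 t₁ ⊆ Ico 0 T := fun t ht => ⟨ht.1, ht.2.trans_lt h1⟩
  obtain ⟨c, hc⟩ := isCompact_Icc.exists_bound_of_continuousOn
    ((H.continuousOn_meanRadius.mono hsub).inv₀ fun t ht => (H.meanRadius_pos (hsub ht)).ne')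
  obtain ⟨B, hB⟩ := SmoothPeriodic.one.exists_fourierBound m
  refine ⟨c * A + |-1| * B, fun t ht => ?_⟩
  have hradius := H.jointlySmooth_radius.smoothPeriodic (hsub ht)
  rw [radiusDev, sub_eq_add_neg, ← neg_one_smul ℝ (1 : ℝ → ℝ)]
  refine (((hA t ht).const_smul _).mono ?_).add (hradius.const_smul _).continuous
    (SmoothPeriodic.one.const_smul _).continuous (hB.const_smul (-1))
  exact mul_le_mul_of_nonneg_right (hc t ht) (hA t ht).nonneg

end IsPCSF

/-! ### Decay and global smallness of the deviation -/

namespace IsPCSF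

variable {p m : ℕ} {T : ℝ} {k : ℝ → ℝ → ℝ} {ψ : ℝ → ℝ} {t₀ t₁ D : ℝ}

/-- The forcing felt by a solution of size `M` sustains at most half of that size. -/
theorem fourierBound_radiusDev_improve (hp : 1 ≤ p) (H : IsPCSF p T k ψ) (h0 : 0 ≤ t₀)
    (h1 : t₁ < T)
    (hforcing : ∀ t ∈ Icc t₀ t₁, ∀ A, FourierBound m (radiusDev k t) A →
      TameBound m (forcing p k t) (1 / 20) (1 / 20 * A))
    (hD : FourierBound m (radiusDev k t₀) D) {M : ℝ}
    (hM : ∀ t ∈ Icc t₀ t₁, FourierBound m (radiusDev k t)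
      (M * (meanRadius k t / meanRadius k t₀) ^ (3 / 2 * p : ℝ))) :
    ∀ t ∈ Icc t₀ t₁, FourierBound m (radiusDev k t)
      (max D (M / 2) * (meanRadius k t / meanRadius k t₀) ^ (3 / 2 * p : ℝ)) := by
  intro t ht n
  have hR {s : ℝ} (hs : s ∈ Icc t₀ t₁) : 0 < meanRadius k s :=
    H.meanRadius_pos ⟨h0.trans hs.1, hs.2.trans_lt h1⟩
  have ht₀ : t₀ ∈ Icc t₀ t₁ := ⟨le_rfl, ht.1.trans ht.2⟩
  have hw := pow_pos (freqWeight_pos n) m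
  have hR₀ := rpow_pos_of_pos (hR ht₀) (3 / 2 * p)
  have hM' : 0 ≤ max D (M / 2) := hD.nonneg.trans (le_max_left _ _)
  rcases le_or_gt |n| 1 with hn | hn
  · rw [H.fCoeff_radiusDev_eq_zero ⟨h0.trans ht.1, ht.2.trans_lt h1⟩ hn, norm_zero, mul_zero]
    have := div_pos (hR ht) (hR ht₀)
    positivity
  set E := max D (M / 2) / freqWeight n ^ m * (meanRadius k t₀ ^ (3 / 2 * p : ℝ))⁻¹ with hE
  have hrescale {s : ℝ} (hs : s ∈ Icc t₀ t₁) : E * meanRadius k s ^ (3 / 2 * p : ℝ) =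
      max D (M / 2) * (meanRadius k s / meanRadius k t₀) ^ (3 / 2 * p : ℝ) / freqWeight n ^ m := by
    rw [hE, div_rpow (hR hs).le (hR ht₀).le]
    ring
  have hmode := H.norm_fCoeff_radiusDev_le_rpow hp h0 h1 hn (E := E) (by positivity)
    (fun s hs => (hforcing s hs _ (hM s hs)).low.abs_re_fCoeff_zero_le) (fun s hs => ?_) ?_ t ht
  · rwa [hrescale ht, le_div_iff₀' hw] at hmode
  · refine ((hforcing s hs _ (hM s hs)).high.norm_fCoeff_le n).trans ?_
    rw [hrescale hs, div_right_comm]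
    have := rpow_pos_of_pos (div_pos (hR hs) (hR ht₀)) (3 / 2 * p)
    gcongr
    nlinarith [le_max_right D (M / 2)]
  · rw [hrescale ht₀, div_self (hR ht₀).ne', one_rpow, mul_one]
    exact (hD.mono (le_max_left _ _)).norm_fCoeff_le n

theorem exists_fourierBound_radiusDev_div (H : IsPCSF p T k ψ) (m : ℕ) (h0 : 0 ≤ t₀) (h1 : t₁ < T)
    (q : ℝ) : ∃ M, ∀ t ∈ Icc t₀ t₁,
      FourierBound m (radiusDev k t) (M * (meanRadius k t / meanRadius k t₀) ^ q) := by
  have hsub : Icc t₀ t₁ ⊆ Ico 0 T := fun t ht => ⟨h0.trans ht.1, ht.2.trans_lt h1⟩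
  have hratio : ∀ t ∈ Icc t₀ t₁, 0 < meanRadius k t / meanRadius k t₀ := fun t ht =>
    div_pos (H.meanRadius_pos (hsub ht)) (H.meanRadius_pos (hsub ⟨le_rfl, ht.1.trans ht.2⟩))
  obtain ⟨A, hA⟩ := H.exists_fourierBound_radiusDev m h1
  have hcont : ContinuousOn (fun t => A / (meanRadius k t / meanRadius k t₀) ^ q) (Icc t₀ t₁) :=
    continuousOn_const.div (((H.continuousOn_meanRadius.mono hsub).div_const _).rpow_const
      fun t ht => .inl (hratio t ht).ne') fun t ht => (rpow_pos_of_pos (hratio t ht) q).ne'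
  obtain ⟨M, hM⟩ := isCompact_Icc.exists_bound_of_continuousOn hcont
  refine ⟨M, fun t ht => (hA t ⟨h0.trans ht.1, ht.2⟩).mono ?_⟩
  exact (div_le_iff₀ (rpow_pos_of_pos (hratio t ht) q)).1 ((le_abs_self _).trans (hM t ht))

theorem fourierBound_radiusDev_decay (hp : 1 ≤ p) (H : IsPCSF p T k ψ) (h0 : 0 ≤ t₀) (h1 : t₁ < T)
    (hforcing : ∀ t ∈ Icc t₀ t₁, ∀ A, FourierBound m (radiusDev k t) A →
      TameBound m (forcing p k t) (1 / 20) (1 / 20 * A))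
    (hD : FourierBound m (radiusDev k t₀) D) :
    ∀ t ∈ Icc t₀ t₁, FourierBound m (radiusDev k t)
      (D * (meanRadius k t / meanRadius k t₀) ^ (3 / 2 * p : ℝ)) := by
  have hratio : ∀ t ∈ Icc t₀ t₁, 0 < (meanRadius k t / meanRadius k t₀) ^ (3 / 2 * p : ℝ) :=
    fun t ht => rpow_pos_of_pos (div_pos (H.meanRadius_pos ⟨h0.trans ht.1, ht.2.trans_lt h1⟩)
      (H.meanRadius_pos ⟨h0, (ht.1.trans ht.2).trans_lt h1⟩)) _
  set f : Icc t₀ t₁ × ℤ → ℝ := fun i => freqWeight i.2 ^ m * ‖fCoeff (radiusDev k i.1) i.2‖ /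
    (meanRadius k i.1 / meanRadius k t₀) ^ (3 / 2 * p : ℝ)
  have hf (M : ℝ) : (∀ i, f i ≤ M) ↔ ∀ t ∈ Icc t₀ t₁, FourierBound m (radiusDev k t)
      (M * (meanRadius k t / meanRadius k t₀) ^ (3 / 2 * p : ℝ)) :=
    ⟨fun h t ht n => (div_le_iff₀ (hratio t ht)).1 (h (⟨t, ht⟩, n)),
      fun h i => (div_le_iff₀ (hratio i.1 i.1.2)).2 (h i.1 i.1.2 i.2)⟩
  obtain ⟨M₀, hM₀⟩ := H.exists_fourierBound_radiusDev_div m h0 h1 (3 / 2 * p)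
  refine (hf D).1 (le_of_self_improving (φ := fun M => max D (M / 2))
    ⟨M₀, forall_mem_range.2 ((hf M₀).2 hM₀)⟩
    (fun M hM => (hf _).2 (H.fourierBound_radiusDev_improve hp h0 h1 hforcing hD ((hf M).1 hM)))
    fun M hM => ?_)
  rcases le_max_iff.1 hM with h | h
  · exact h
  · linarith [hD.nonneg]

theorem continuousOn_fCoeff_radiusDev (H : IsPCSF p T k ψ) (n : ℤ) :
    ContinuousOn (fun t => fCoeff (radiusDev k t) n) (Ico 0 T) := by
  rcases eq_or_ne n 0 with rfl | hn
  · exact continuousOn_const.congr fun t ht => H.fCoeff_radiusDev_zero ht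
  have hR : ∀ t ∈ Ico 0 T, (meanRadius k t : ℂ) ≠ 0 := fun t ht => by
    exact_mod_cast (H.meanRadius_pos ht).ne'
  refine ((H.jointlySmooth_radius.continuousOn_fCoeff n).div
    (Complex.continuous_ofReal.comp_continuousOn H.continuousOn_meanRadius) hR).congr
    fun t ht => ?_
  exact eq_div_of_mul_eq (hR t ht) ((mul_comm _ _).trans (H.fCoeff_radius ht hn).symm)

theorem eventually_fourierBound_radiusDev (H : IsPCSF p T k ψ) {t c c' : ℝ} (ht : t ∈ Ico 0 T)
    (h : FourierBound m (radiusDev k t) c) (hc : c < c') :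
    ∀ᶠ s in 𝓝[Ico 0 T] t, FourierBound m (radiusDev k s) c' := by
  obtain ⟨t₁, htt₁, h1⟩ := exists_between ht.2
  obtain ⟨A, hA⟩ := H.exists_fourierBound_radiusDev (m + 1) h1
  refine FourierBound.eventually_of_tendsto (A := A) ?_
    (fun n => H.continuousOn_fCoeff_radiusDev n t ht) h hc
  filter_upwards [self_mem_nhdsWithin, nhdsWithin_le_nhds (Iio_mem_nhds htt₁)] with s hs hs'
  exact hA s ⟨hs.1, le_of_lt hs'⟩

theorem isClosed_fourierBound_radiusDev (H : IsPCSF p T k ψ) (h0 : 0 ≤ t₀) (h1 : t₁ < T) (c : ℝ) :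
    IsClosed ({t | FourierBound m (radiusDev k t) c} ∩ Icc t₀ t₁) := by
  have hinter : {t | FourierBound m (radiusDev k t) c} ∩ Icc t₀ t₁ = ⋂ n : ℤ,
      Icc t₀ t₁ ∩ (fun t => freqWeight n ^ m * ‖fCoeff (radiusDev k t) n‖) ⁻¹' Iic c := by
    rw [← inter_iInter, inter_comm]
    congr 1
    ext t
    simp [FourierBound]
  rw [hinter]
  refine isClosed_iInter fun n => ContinuousOn.preimage_isClosed_of_isClosed ?_ isClosed_Icc
    isClosed_Iic
  exact continuousOn_const.mul ((H.continuousOn_fCoeff_radiusDev n).mono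
    fun t ht => ⟨h0.trans ht.1, ht.2.trans_lt h1⟩).norm

theorem antitoneOn_meanRadius (hp : 1 ≤ p) (H : IsPCSF p T k ψ) (h0 : 0 ≤ t₀) (h1 : t₁ < T)
    (h : ∀ t ∈ Icc t₀ t₁, |(fCoeff (forcing p k t) 0).re| ≤ 1) :
    AntitoneOn (meanRadius k) (Icc t₀ t₁) := by
  intro s hs t ht hst
  have hsub : Icc s t ⊆ Icc t₀ t₁ := Icc_subset_Icc hs.1 ht.2
  have hsub' : Icc s t ⊆ Ico 0 T := fun r hr => ⟨h0.trans (hsub hr).1, (hsub hr).2.trans_lt h1⟩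
  refine image_le_of_deriv_right_le_deriv_boundary (B := fun _ => meanRadius k s) (B' := 0)
    (H.continuousOn_meanRadius.mono hsub')
    (fun r hr => H.hasDerivWithinAt_meanRadius hp (hsub' (Ico_subset_Icc_self hr))) le_rfl
    continuousOn_const (fun r _ => hasDerivWithinAt_const _ _ _) (fun r hr => ?_) ⟨hst, le_rfl⟩
  have hr := Ico_subset_Icc_self hr
  have hR := H.meanRadius_pos (hsub' hr)
  have : 0 ≤ 1 + (fCoeff (forcing p k r) 0).re := by linarith [(abs_le.1 (h r (hsub hr))).1]
  rw [Pi.zero_apply, neg_nonpos]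
  positivity

theorem fourierBound_radiusDev_of_left (hp : 1 ≤ p) (H : IsPCSF p T k ψ) (h0 : 0 ≤ t₀)
    (h1 : t₁ < T)
    (hforcing : ∀ t ∈ Icc t₀ t₁, ∀ A, FourierBound m (radiusDev k t) A →
      TameBound m (forcing p k t) (1 / 20) (1 / 20 * A))
    (hD : FourierBound m (radiusDev k t₀) D) :
    ∀ t ∈ Icc t₀ t₁, FourierBound m (radiusDev k t) D := by
  intro t ht
  have ht₀ : t₀ ∈ Icc t₀ t₁ := ⟨le_rfl, ht.1.trans ht.2⟩
  have hR {s : ℝ} (hs : s ∈ Icc t₀ t₁) : 0 < meanRadius k s :=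
    H.meanRadius_pos ⟨h0.trans hs.1, hs.2.trans_lt h1⟩
  obtain ⟨A, hA⟩ := H.exists_fourierBound_radiusDev m h1
  have hanti := H.antitoneOn_meanRadius hp h0 h1 fun s hs =>
    (hforcing s hs A (hA s ⟨h0.trans hs.1, hs.2⟩)).low.abs_re_fCoeff_zero_le.trans (by norm_num)
  have hratio : meanRadius k t / meanRadius k t₀ ≤ 1 :=
    div_le_one_of_le₀ (hanti ht₀ ht ht.1) (hR ht₀).le
  exact (H.fourierBound_radiusDev_decay hp h0 h1 hforcing hD t ht).mono (mul_le_of_le_one_right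
    hD.nonneg (rpow_le_one (div_pos (hR ht) (hR ht₀)).le hratio (by positivity)))

/-- Continuity method: while the deviation is at most `ε`, it stays below its initial size. -/
theorem fourierBound_radiusDev_of_initial (hp : 1 ≤ p) (H : IsPCSF p T k ψ) {c ε : ℝ} (hc : c < ε)
    (hforcing : ∀ t ∈ Ico 0 T, ∀ A, TameBound 2 (radiusDev k t) ε A →
      TameBound 2 (forcing p k t) (1 / 20) (1 / 20 * A))
    (hinit : FourierBound 2 (radiusDev k 0) c) :
    ∀ t ∈ Ico 0 T, FourierBound 2 (radiusDev k t) c := by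
  intro t₁ ht₁
  refine (H.isClosed_fourierBound_radiusDev le_rfl ht₁.2 c).Icc_subset_of_forall_mem_nhdsWithin
    hinit (fun x ⟨hx, hx0, hxt⟩ => ?_) ⟨ht₁.1, le_rfl⟩
  have hxT : x ∈ Ico 0 T := ⟨hx0, hxt.trans ht₁.2⟩
  have hsmall : {s | s ∈ Ico 0 T ∧ FourierBound 2 (radiusDev k s) ε} ∈ 𝓝[≥] x := by
    have hIco : Ico 0 T ∈ 𝓝[≥] x := mem_of_superset (Ico_mem_nhdsGE hxT.2) (Ico_subset_Ico_left hx0)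
    exact inter_mem hIco (nhdsWithin_le_of_mem hIco (H.eventually_fourierBound_radiusDev hxT hx hc))
  obtain ⟨y, hxy, hy⟩ := (mem_nhdsGE_iff_exists_Icc_subset).1 hsmall
  refine mem_of_superset (Ioc_mem_nhdsGT hxy) fun z hz => ?_
  exact H.fourierBound_radiusDev_of_left hp hx0 (hy ⟨hz.1.le, hz.2⟩).1.2
    (fun s hs A hA => have hs := hy ⟨hs.1, hs.2.trans hz.2⟩; hforcing s hs.1 A ⟨hs.2, hA⟩)
    hx z ⟨hz.1.le, le_rfl⟩

theorem tendsto_meanRadius (H : IsPCSF p T k ψ) (hT : 0 < T) {B : ℝ}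
    (hB : ∀ t ∈ Ico 0 T, ∀ θ, curvDev k t θ ≤ B) : Tendsto (meanRadius k) (𝓝[<] T) (𝓝 0) := by
  have ⟨_, _, _, _, _, _, _, _, hblowup, _⟩ := H
  have hIco : ∀ᶠ t in 𝓝[<] T, t ∈ Ico 0 T := Ico_mem_nhdsLT hT
  refine squeeze_zero' (hIco.mono fun t ht => (H.meanRadius_pos ht).le) ?_
    (hblowup.const_div_atTop (1 + B))
  filter_upwards [hIco, hblowup.eventually_gt_atTop 0] with t ht hpos
  have hR := H.meanRadius_pos ht
  rw [le_div_iff₀' hpos, ← le_div_iff₀ hR]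
  have : Nonempty (Icc 0 (2 * π)) := ⟨⟨0, le_rfl, two_pi_pos.le⟩⟩
  refine ciSup_le fun θ => (le_div_iff₀' hR).2 ?_
  exact sub_le_iff_le_add'.1 (hB t ht θ)

end IsPCSF

/-! ### Sharp decay near the blow-up time -/

theorem exists_forall_Ico_of_eventually_nhdsLT {T : ℝ} {P : ℝ → Prop} (h : ∀ᶠ t in 𝓝[<] T, P t) :
    ∃ s < T, ∀ t ∈ Ico s T, P t :=
  mem_nhdsLT_iff_exists_Ico_subset.1 h

/-- The solution shrinks to a point at time `T`, with a preliminary rate of convergence of the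
shape to a circle. The exponent `3 / 2 * p` is chosen so that the forcing, being quadratic, is of
order `R ^ (3 * p)`, smaller than the final rate `R ^ (3 * p - 1)`. -/
structure RoundCollapse (p : ℕ) (T : ℝ) (k : ℝ → ℝ → ℝ) : Prop where
  time_pos : 0 < T
  tendsto_meanRadius : Tendsto (meanRadius k) (𝓝[<] T) (𝓝 0)
  exists_fourierBound : ∃ D, ∀ᶠ t in 𝓝[<] T,
    FourierBound 2 (radiusDev k t) (D * meanRadius k t ^ (3 / 2 * p : ℝ))

theorem sharp_barrier_le {p : ℕ} (hp : 1 ≤ p) {R₀ r ν G N a : ℝ} (hr : 0 < r) (hrR : r ≤ R₀)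
    (hG : 0 ≤ G) (hν : |ν| ≤ 1 / 4) (hν' : 24 * p * R₀ * |ν| ≤ r) (hN : a * N ≤ G * r / 4)
    (ha : 3 ≤ a) :
    (1 + ν) / p * (G * (3 * p * (2 * R₀ - r) - r)) ≤ a * (G * (2 * R₀ - r) - N / p) := by
  have hp' : (0 : ℝ) < p := by exact_mod_cast hp
  have hlinear : 3 * (G * (2 * R₀ - r)) ≤ a * (G * (2 * R₀ - r)) :=
    mul_le_mul_of_nonneg_right ha (mul_nonneg hG (by linarith))
  have hgap : (1 + ν) * (3 * p * (2 * R₀ - r) - r) ≤ 3 * p * (2 * R₀ - r) - r / 4 := by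
    have : ν * (3 * p * (2 * R₀ - r)) ≤ |ν| * (3 * p * (2 * R₀)) :=
      mul_le_mul (le_abs_self ν) (by nlinarith) (mul_nonneg (by positivity) (by linarith))
        (abs_nonneg ν)
    nlinarith [(abs_le.1 hν).1]
  rw [div_mul_eq_mul_div, div_le_iff₀ hp']
  calc (1 + ν) * (G * (3 * p * (2 * R₀ - r) - r))
      ≤ G * (3 * p * (2 * R₀ - r) - r / 4) := by
        rw [mul_left_comm]
        gcongr
    _ ≤ a * (G * (2 * R₀ - r)) * p - a * N := by nlinarith
    _ = a * (G * (2 * R₀ - r) - N / p) * p := by field_simp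

theorem FourierBound.sq_sub_one_mul_norm_fCoeff_le {m : ℕ} {f : ℝ → ℝ} {A : ℝ}
    (h : FourierBound (m + 2) f A) (n : ℤ) :
    ((n : ℝ) ^ 2 - 1) * ‖fCoeff f n‖ ≤ A / freqWeight n ^ m := by
  have hweight : (n : ℝ) ^ 2 - 1 ≤ freqWeight n ^ 2 := by
    have : |(n : ℝ)| ^ 2 ≤ freqWeight n ^ 2 := by gcongr; exact le_max_right _ _
    rw [sq_abs] at this
    linarith
  rw [le_div_iff₀' (pow_pos (freqWeight_pos n) m)]
  have := freqWeight_pos n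
  calc freqWeight n ^ m * (((n : ℝ) ^ 2 - 1) * ‖fCoeff f n‖)
      ≤ freqWeight n ^ m * (freqWeight n ^ 2 * ‖fCoeff f n‖) := by gcongr
    _ = freqWeight n ^ (m + 2) * ‖fCoeff f n‖ := by ring
    _ ≤ A := h n

namespace RoundCollapse

variable {p : ℕ} {T : ℝ} {k : ℝ → ℝ → ℝ}

theorem eventually_mem (h : RoundCollapse p T k) : ∀ᶠ t in 𝓝[<] T, t ∈ Ico 0 T :=
  Ico_mem_nhdsLT h.time_pos

theorem eventually_mul_rpow_le (h : RoundCollapse p T k) (C : ℝ) {q : ℝ} (hq : 0 < q) {δ : ℝ}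
    (hδ : 0 < δ) : ∀ᶠ t in 𝓝[<] T, C * meanRadius k t ^ q ≤ δ := by
  have hlim : Tendsto (fun t => C * meanRadius k t ^ q) (𝓝[<] T) (𝓝 0) := by
    simpa [zero_rpow hq.ne'] using (h.tendsto_meanRadius.rpow_const (.inr hq.le)).const_mul C
  exact hlim.eventually_le_const hδ

theorem eventually_mul_pow_le (h : RoundCollapse p T k) (C : ℝ) {j : ℕ} (hj : 1 ≤ j) {δ : ℝ}
    (hδ : 0 < δ) : ∀ᶠ t in 𝓝[<] T, C * meanRadius k t ^ j ≤ δ := by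
  simpa using h.eventually_mul_rpow_le C (q := j) (by exact_mod_cast hj) hδ

theorem eventually_fourierBound_radiusDev (h : RoundCollapse p T k) (hp : 1 ≤ p) {δ : ℝ}
    (hδ : 0 < δ) : ∀ᶠ t in 𝓝[<] T, FourierBound 2 (radiusDev k t) δ := by
  obtain ⟨D, hD⟩ := h.exists_fourierBound
  filter_upwards [hD, h.eventually_mul_rpow_le D (q := 3 / 2 * p) (by positivity) hδ] with t ht hle
    using ht.mono hle

end RoundCollapse

namespace IsPCSF

variable {p m : ℕ} {T : ℝ} {k : ℝ → ℝ → ℝ} {ψ : ℝ → ℝ} {t₀ t₁ : ℝ}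

theorem exists_eventually_fourierBound_radiusDev (hp : 1 ≤ p) (H : IsPCSF p T k ψ)
    (hcol : RoundCollapse p T k) (hm : 2 ≤ m) : ∃ D, ∀ᶠ t in 𝓝[<] T,
      FourierBound m (radiusDev k t) (D * meanRadius k t ^ (3 / 2 * p : ℝ)) := by
  obtain ⟨ε, hε, -, hforcing⟩ := exists_tameBound_forcing hm p
  obtain ⟨s, hsT, hs⟩ := exists_forall_Ico_of_eventually_nhdsLT
    (hcol.eventually_mem.and (hcol.eventually_fourierBound_radiusDev hp hε))
  have hs0 := (hs s ⟨le_rfl, hsT⟩).1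
  obtain ⟨A, hA⟩ := (H.smoothPeriodic_radiusDev hs0).exists_fourierBound m
  refine ⟨A / meanRadius k s ^ (3 / 2 * p : ℝ), ?_⟩
  filter_upwards [Ico_mem_nhdsLT hsT] with t ht
  have hdecay := H.fourierBound_radiusDev_decay hp hs0.1 ht.2 (fun r hr A' hA' =>
    have hr := hs r ⟨hr.1, hr.2.trans_lt ht.2⟩; hforcing H hr.1 ⟨hr.2, hA'⟩) hA t ⟨ht.1, le_rfl⟩
  rwa [div_rpow (H.meanRadius_pos (hs t ht).1).le (H.meanRadius_pos hs0).le, ← mul_div_assoc,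
    mul_div_right_comm] at hdecay

theorem exists_eventually_fourierBound_forcing (hp : 1 ≤ p) (H : IsPCSF p T k ψ)
    (hcol : RoundCollapse p T k) (hm : 2 ≤ m) : ∃ C > 0, ∀ᶠ t in 𝓝[<] T,
      FourierBound m (forcing p k t) (C * meanRadius k t ^ (3 * p)) := by
  obtain ⟨C, hC, hremainder⟩ := exists_tameBound_powRemainder hm p
  obtain ⟨D, hD⟩ := H.exists_eventually_fourierBound_radiusDev hp hcol hm
  refine ⟨C * D * D + 1, by nlinarith [mul_self_nonneg D], ?_⟩
  filter_upwards [hcol.eventually_mem, hD,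
    hcol.eventually_mul_rpow_le (4 * convConst m * D) (q := 3 / 2 * p) (by positivity) one_pos]
    with t ht hD hsmall
  rw [mul_assoc (4 * convConst m)] at hsmall
  have hR := H.meanRadius_pos ht
  refine (hremainder (H.smoothPeriodic_radiusDev ht) (H.smoothPeriodic_curvDev ht)
    (H.one_add_radiusDev_mul_one_add_curvDev ht) ⟨hD.of_le hm, hD⟩ hsmall).high.mono ?_
  have hsq : meanRadius k t ^ (3 * p) =
      meanRadius k t ^ (3 / 2 * p : ℝ) * meanRadius k t ^ (3 / 2 * p : ℝ) := by
    rw [← rpow_add hR, ← rpow_natCast]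
    congr 1
    push_cast
    ring
  rw [hsq]
  nlinarith [mul_self_nonneg (meanRadius k t ^ (3 / 2 * p : ℝ))]

/-- The pure power `r ^ (3 * p - 1)` solves the linear equation of the modes `n = ±2` exactly; the
factor `2 * R₀ - r`, where `R₀` is the mean radius at `t₀`, makes it a strict supersolution, which
absorbs the forcing. -/
theorem norm_fCoeff_radiusDev_le_pow (hp : 1 ≤ p) (H : IsPCSF p T k ψ) (h0 : 0 ≤ t₀)
    (h1 : t₁ < T) {n : ℤ} (hn : 1 < |n|) {G : ℝ} (hG : 0 ≤ G)
    (hmean : ∀ t ∈ Icc t₀ t₁, |(fCoeff (forcing p k t) 0).re| ≤ 1 / 4)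
    (hmean' : ∀ t ∈ Icc t₀ t₁,
      24 * p * meanRadius k t₀ * |(fCoeff (forcing p k t) 0).re| ≤ meanRadius k t)
    (hforcing : ∀ t ∈ Icc t₀ t₁,
      (n ^ 2 - 1) * ‖fCoeff (forcing p k t) n‖ ≤
        G * meanRadius k t ^ (3 * p - 1) * meanRadius k t / 4)
    (h₀ : ‖fCoeff (radiusDev k t₀) n‖ ≤ G * meanRadius k t₀ ^ (3 * p - 1) * meanRadius k t₀) :
    ∀ t ∈ Icc t₀ t₁,
      ‖fCoeff (radiusDev k t) n‖ ≤ G * meanRadius k t ^ (3 * p - 1) * (2 * meanRadius k t₀) := by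
  intro t ht
  have hR {s : ℝ} (hs : s ∈ Icc t₀ t₁) : 0 < meanRadius k s :=
    H.meanRadius_pos ⟨h0.trans hs.1, hs.2.trans_lt h1⟩
  have hanti := H.antitoneOn_meanRadius hp h0 h1 fun s hs => (hmean s hs).trans (by norm_num)
  set R₀ := meanRadius k t₀
  have hbarrier := H.norm_fCoeff_radiusDev_le_of_barrier hp h0 h1 (by rintro rfl; simp at hn)
    (n := n) (φ := fun r => G * r ^ (3 * p - 1) * (2 * R₀ - r))
    (fun r _ => ((hasDerivAt_pow (3 * p - 1) r).const_mul G).mul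
      ((hasDerivAt_id' r).const_sub (2 * R₀))) (fun s hs => ?_) ?_ t ht
  · have := pow_pos (hR ht) (3 * p - 1)
    exact hbarrier.trans (by gcongr; exact sub_le_self _ (hR ht).le)
  · have hs := Ico_subset_Icc_self hs
    refine le_of_eq_of_le ?_ (sharp_barrier_le hp (hR hs)
      (hanti ⟨le_rfl, hs.1.trans hs.2⟩ hs hs.1) (mul_nonneg hG (pow_nonneg (hR hs).le (3 * p - 1)))
      (hmean s hs) (hmean' s hs) (hforcing s hs) (three_le_sq_sub_one hn))
    rw [← pow_sub_one_mul (by lia : 3 * p - 1 ≠ 0), Nat.cast_sub (by lia)]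
    push_cast
    ring
  · exact h₀.trans_eq (by ring)

theorem fourierBound_radiusDev_le_pow (hp : 1 ≤ p) (H : IsPCSF p T k ψ) (h0 : 0 ≤ t₀)
    (h1 : t₁ < T) {C E : ℝ} (hCE : 4 * C ≤ E) (hsmall : 24 * p * meanRadius k t₀ * C ≤ 1)
    (hR1 : ∀ t ∈ Icc t₀ t₁, meanRadius k t ≤ 1 ∧ C * meanRadius k t ^ (3 * p) ≤ 1 / 4)
    (hforcing : ∀ t ∈ Icc t₀ t₁,
      FourierBound (m + 2) (forcing p k t) (C * meanRadius k t ^ (3 * p)))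
    (h₀ : FourierBound m (radiusDev k t₀) (E * meanRadius k t₀ ^ (3 * p - 1) * meanRadius k t₀)) :
    ∀ t ∈ Icc t₀ t₁, FourierBound m (radiusDev k t)
      (E * meanRadius k t ^ (3 * p - 1) * (2 * meanRadius k t₀)) := by
  intro t ht n
  have hsub {s : ℝ} (hs : s ∈ Icc t₀ t₁) : s ∈ Ico 0 T := ⟨h0.trans hs.1, hs.2.trans_lt h1⟩
  have hR {s : ℝ} (hs : s ∈ Icc t₀ t₁) : 0 < meanRadius k s := H.meanRadius_pos (hsub hs)
  have ht₀ : t₀ ∈ Icc t₀ t₁ := ⟨le_rfl, ht.1.trans ht.2⟩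
  have hw := pow_pos (freqWeight_pos n) m
  have hC : 0 ≤ C := nonneg_of_mul_nonneg_left (hforcing t ht).nonneg (pow_pos (hR ht) _)
  rcases le_or_gt |n| 1 with hn | hn
  · rw [H.fCoeff_radiusDev_eq_zero (hsub ht) hn, norm_zero, mul_zero]
    have := hR ht
    have := hR ht₀
    have : 0 ≤ E := by linarith
    positivity
  have hmean {s : ℝ} (hs : s ∈ Icc t₀ t₁) := (hforcing s hs).abs_re_fCoeff_zero_le
  have hmode := H.norm_fCoeff_radiusDev_le_pow hp h0 h1 hn (G := E / freqWeight n ^ m)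
    (div_nonneg (by linarith) hw.le) (fun s hs => (hmean hs).trans (hR1 s hs).2)
    (fun s hs => ?_) (fun s hs => ?_) ?_ t ht
  · rw [div_mul_eq_mul_div, div_mul_eq_mul_div, le_div_iff₀' hw] at hmode
    exact hmode
  · calc 24 * p * meanRadius k t₀ * |(fCoeff (forcing p k s) 0).re|
        ≤ 24 * p * meanRadius k t₀ * (C * meanRadius k s ^ (3 * p)) := by
          have := hR ht₀
          gcongr
          exact hmean hs
      _ ≤ meanRadius k s ^ (3 * p) := by
          rw [← mul_assoc]
          exact mul_le_of_le_one_left (pow_nonneg (hR hs).le _) hsmall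
      _ ≤ meanRadius k s := pow_le_of_le_one (hR hs).le (hR1 s hs).1 (by lia)
  · refine ((hforcing s hs).sq_sub_one_mul_norm_fCoeff_le n).trans ?_
    rw [mul_assoc, pow_sub_one_mul (by lia : 3 * p ≠ 0), div_mul_eq_mul_div, div_right_comm]
    have := hR hs
    gcongr
    nlinarith [pow_pos this (3 * p)]
  · rw [div_mul_eq_mul_div, div_mul_eq_mul_div]
    exact h₀.norm_fCoeff_le n

theorem exists_eventually_fourierBound_radiusDev_pow (hp : 1 ≤ p) (H : IsPCSF p T k ψ)
    (hcol : RoundCollapse p T k) (m : ℕ) : ∃ E, ∀ᶠ t in 𝓝[<] T,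
      FourierBound m (radiusDev k t) (E * meanRadius k t ^ (3 * p - 1)) := by
  obtain ⟨C, hC, hforcing⟩ := H.exists_eventually_fourierBound_forcing hp hcol (m := m + 2) (by lia)
  have hone : ∀ᶠ t in 𝓝[<] T, meanRadius k t ≤ 1 := by
    simpa using hcol.eventually_mul_pow_le 1 le_rfl one_pos
  have hsmall : ∀ᶠ t in 𝓝[<] T, 24 * p * C * meanRadius k t ≤ 1 := by
    simpa using hcol.eventually_mul_pow_le (24 * p * C) le_rfl one_pos
  have hmean : ∀ᶠ t in 𝓝[<] T, C * meanRadius k t ^ (3 * p) ≤ 1 / 4 :=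
    hcol.eventually_mul_pow_le C (by lia) (by norm_num)
  obtain ⟨s, hsT, hs⟩ := exists_forall_Ico_of_eventually_nhdsLT
    (hcol.eventually_mem.and (hforcing.and (hsmall.and (hone.and hmean))))
  obtain ⟨hs0, -, hsmall, -⟩ := hs s ⟨le_rfl, hsT⟩
  have hR := H.meanRadius_pos hs0
  obtain ⟨A, hA⟩ := (H.smoothPeriodic_radiusDev hs0).exists_fourierBound m
  have hA0 := hA.nonneg
  set P := meanRadius k s ^ (3 * p - 1) * meanRadius k s
  have hP : 0 < P := by positivity
  refine ⟨(4 * C + A / P) * (2 * meanRadius k s), ?_⟩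
  filter_upwards [Ico_mem_nhdsLT hsT] with t ht
  have hsub {r : ℝ} (hr : r ∈ Icc s t) := hs r ⟨hr.1, hr.2.trans_lt ht.2⟩
  refine (H.fourierBound_radiusDev_le_pow hp hs0.1 ht.2 (C := C) (E := 4 * C + A / P)
    (le_add_of_nonneg_right (by positivity)) (by linarith) (fun r hr => (hsub hr).2.2.2)
    (fun r hr => (hsub hr).2.1) (hA.mono ?_) t ⟨ht.1, le_rfl⟩).mono (mul_right_comm _ _ _).le
  rw [mul_assoc, add_mul, div_mul_cancel₀ A hP.ne']
  exact le_add_of_nonneg_left (by positivity)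

theorem exists_eventually_fourierBound_curvDev (hp : 1 ≤ p) (H : IsPCSF p T k ψ)
    (hcol : RoundCollapse p T k) (hm : 2 ≤ m) : ∃ E, ∀ᶠ t in 𝓝[<] T,
      FourierBound m (curvDev k t) (E * meanRadius k t ^ (3 * p - 1)) := by
  obtain ⟨E, hE⟩ := H.exists_eventually_fourierBound_radiusDev_pow hp hcol m
  have hK := one_le_convConst m
  refine ⟨4 * E, ?_⟩
  filter_upwards [hcol.eventually_mem, hE,
    hcol.eventually_fourierBound_radiusDev hp (δ := 1 / (4 * convConst m)) (by positivity)]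
    with t ht hE hlow
  have hinv := TameBound.inverse hm (H.smoothPeriodic_radiusDev ht) (H.smoothPeriodic_curvDev ht)
    (H.one_add_radiusDev_mul_one_add_curvDev ht) ⟨hlow, hE⟩ (mul_one_div_cancel (by positivity)).le
  exact hinv.high.mono (mul_assoc _ _ _).ge

end IsPCSF

/-! ### The mean radius in terms of the time to blow-up -/

theorem abs_sub_one_le_abs_pow_sub_one {x : ℝ} (hx : 0 ≤ x) {j : ℕ} (hj : j ≠ 0) :
    |x - 1| ≤ |x ^ j - 1| := by
  rcases le_total 1 x with h | h
  · rw [abs_of_nonneg (sub_nonneg.2 h), abs_of_nonneg (sub_nonneg.2 (one_le_pow₀ h))]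
    exact sub_le_sub_right (le_self_pow₀ h hj) 1
  · rw [abs_of_nonpos (sub_nonpos.2 h), abs_of_nonpos (sub_nonpos.2 (pow_le_one₀ hx h))]
    exact neg_le_neg (sub_le_sub_right (pow_le_of_le_one hx h hj) 1)

theorem abs_div_sub_one_le_of_abs_div_sub_one_le {x y δ : ℝ} (hx : 0 < x) (hy : 0 < y)
    (hδ : δ ≤ 1 / 2) (h : |x / y - 1| ≤ δ) : |y / x - 1| ≤ 2 * δ := by
  have hhalf : y ≤ 2 * x := by
    have := (le_div_iff₀ hy).1 (show 1 / 2 ≤ x / y by linarith [(abs_le.1 h).1])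
    linarith
  have hδ0 : 0 ≤ δ := (abs_nonneg _).trans h
  rw [div_sub_one hy.ne', abs_div, abs_of_pos hy, div_le_iff₀ hy] at h
  rw [div_sub_one hx.ne', abs_div, abs_of_pos hx, div_le_iff₀ hx, abs_sub_comm]
  nlinarith

/-- The radius `Λ` at time `t` of the circle that shrinks to a point at time `T`; the normalized
curvature is `Λ k`. -/
noncomputable def shrinkingRadius (p : ℕ) (T t : ℝ) : ℝ :=
  ((p + 1 : ℝ) / p) ^ (1 / (p + 1 : ℝ)) * (T - t) ^ (1 / (p + 1 : ℝ))

section shrinkingRadius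

variable {p : ℕ} {T s t : ℝ}

theorem shrinkingRadius_pow (ht : t ≤ T) :
    shrinkingRadius p T t ^ (p + 1) = (p + 1) / p * (T - t) := by
  have hcast : (p + 1 : ℝ) = (p + 1 : ℕ) := by push_cast; rfl
  rw [shrinkingRadius, mul_pow, one_div, hcast, rpow_inv_natCast_pow (by positivity) (by lia),
    rpow_inv_natCast_pow (sub_nonneg.2 ht) (by lia)]

theorem shrinkingRadius_pos (hp : 1 ≤ p) (ht : t < T) : 0 < shrinkingRadius p T t := by
  have : (0 : ℝ) < p := by exact_mod_cast hp
  exact mul_pos (rpow_pos_of_pos (by positivity) _) (rpow_pos_of_pos (sub_pos.2 ht) _)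

theorem shrinkingRadius_anti (hst : s ≤ t) (ht : t ≤ T) :
    shrinkingRadius p T t ≤ shrinkingRadius p T s := by
  have := sub_nonneg.2 ht
  unfold shrinkingRadius
  gcongr

theorem shrinkingRadius_tOf (hT : 0 < T) (τ : ℝ) :
    shrinkingRadius p T (tOf p T τ) = shrinkingRadius p T 0 * exp (-τ) := by
  have htime : T - tOf p T τ = (T - 0) * exp (-(p + 1) * τ) := by rw [tOf]; ring
  have hexp : -((p : ℝ) + 1) * τ * (1 / (p + 1)) = -τ := by field_simp
  rw [shrinkingRadius, htime, mul_rpow (sub_nonneg.2 hT.le) (exp_pos _).le, ← exp_mul, hexp,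
    ← mul_assoc, shrinkingRadius]

theorem shrinkingRadius_tOf_pow (hp : 1 ≤ p) (hT : 0 < T) (τ : ℝ) :
    shrinkingRadius p T (tOf p T τ) ^ (3 * p - 1) =
      shrinkingRadius p T 0 ^ (3 * p - 1) * exp (-(3 * p - 1) * τ) := by
  rw [shrinkingRadius_tOf hT, mul_pow, ← exp_nat_mul, Nat.cast_sub (by lia)]
  push_cast
  ring_nf

theorem tOf_mem_Ico (hT : 0 < T) {τ : ℝ} (hτ : 0 ≤ τ) : tOf p T τ ∈ Ico 0 T := by
  refine ⟨mul_nonneg hT.le (sub_nonneg.2 (exp_le_one_iff.2 ?_)),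
    mul_lt_of_lt_one_right hT (sub_lt_self _ (exp_pos _))⟩
  rw [neg_mul]
  exact neg_nonpos.2 (by positivity)

end shrinkingRadius

namespace IsPCSF

variable {p : ℕ} {T : ℝ} {k : ℝ → ℝ → ℝ} {ψ : ℝ → ℝ} {t : ℝ}

theorem hasDerivWithinAt_meanRadius_pow (hp : 1 ≤ p) (H : IsPCSF p T k ψ) (ht : t ∈ Ico 0 T) :
    HasDerivWithinAt (fun s => meanRadius k s ^ (p + 1))
      (-((p + 1) / p * (1 + (fCoeff (forcing p k t) 0).re))) (Ici t) t := by
  have hR := H.meanRadius_pos ht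
  refine ((H.hasDerivWithinAt_meanRadius hp ht).pow (p + 1)).congr_deriv ?_
  rw [Nat.add_sub_cancel]
  push_cast
  field_simp

theorem abs_meanRadius_pow_sub_le (hp : 1 ≤ p) (H : IsPCSF p T k ψ)
    (hlim : Tendsto (meanRadius k) (𝓝[<] T) (𝓝 0)) (ht : t ∈ Ico 0 T) {δ : ℝ}
    (hδ : ∀ s ∈ Ico t T, |(fCoeff (forcing p k s) 0).re| ≤ δ) :
    |meanRadius k t ^ (p + 1) - (p + 1) / p * (T - t)| ≤ δ * ((p + 1) / p * (T - t)) := by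
  set f : ℝ → ℝ := fun s => meanRadius k s ^ (p + 1) + (p + 1) / p * s
  have hsegment : ∀ z ∈ Ico t T, ‖f z - f t‖ ≤ (p + 1) / p * δ * (z - t) := fun z hz => by
    have hsub : Icc t z ⊆ Ico 0 T := fun s hs => ⟨ht.1.trans hs.1, hs.2.trans_lt hz.2⟩
    refine norm_image_sub_le_of_norm_deriv_right_le_segment
      (((H.continuousOn_meanRadius.mono hsub).pow _).add (by fun_prop))
      (fun s hs => (H.hasDerivWithinAt_meanRadius_pow hp (hsub (Ico_subset_Icc_self hs))).add
        ((hasDerivWithinAt_id s _).const_mul _)) (fun s hs => ?_) z ⟨hz.1, le_rfl⟩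
    rw [mul_one_add, mul_one, neg_add_rev, neg_add_cancel_right, norm_neg, norm_mul,
      norm_of_nonneg (by positivity : (0 : ℝ) ≤ (p + 1) / p)]
    have := hδ s ⟨hs.1, hs.2.trans hz.2⟩
    rw [← norm_eq_abs] at this
    gcongr
  have hid : Tendsto (fun z : ℝ => z) (𝓝[<] T) (𝓝 T) := tendsto_id.mono_left nhdsWithin_le_nhds
  have hf : Tendsto f (𝓝[<] T) (𝓝 ((p + 1) / p * T)) := by
    simpa using (hlim.pow (p + 1)).add (hid.const_mul ((p + 1 : ℝ) / p))
  have hT := le_of_tendsto_of_tendsto (hf.sub_const (f t)).norm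
    ((hid.sub_const t).const_mul ((p + 1) / p * δ))
    (mem_of_superset (Ico_mem_nhdsLT ht.2) hsegment)
  calc |meanRadius k t ^ (p + 1) - (p + 1) / p * (T - t)| = ‖(p + 1) / p * T - f t‖ := by
        rw [norm_eq_abs, abs_sub_comm]
        congr 1
        ring
    _ ≤ (p + 1) / p * δ * (T - t) := hT
    _ = δ * ((p + 1) / p * (T - t)) := by ring

theorem exists_eventually_abs_meanRadius_div_sub_one_le (hp : 1 ≤ p) (H : IsPCSF p T k ψ)
    (hcol : RoundCollapse p T k) : ∃ C > 0, ∀ᶠ t in 𝓝[<] T,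
      |meanRadius k t / shrinkingRadius p T t - 1| ≤ C * meanRadius k t ^ (3 * p) := by
  obtain ⟨C, hC, hforcing⟩ := H.exists_eventually_fourierBound_forcing hp hcol le_rfl
  obtain ⟨s, hsT, hs⟩ := exists_forall_Ico_of_eventually_nhdsLT (hcol.eventually_mem.and
    (hforcing.and (hcol.eventually_mul_pow_le C (j := 3 * p) (by lia) one_pos)))
  refine ⟨C, hC, ?_⟩
  filter_upwards [Ico_mem_nhdsLT hsT] with t ht
  have ht0 := (hs t ht).1
  have hR := H.meanRadius_pos ht0
  have hΛ := shrinkingRadius_pos hp ht.2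
  have hmean : ∀ r ∈ Ico t T,
      |(fCoeff (forcing p k r) 0).re| ≤ C * meanRadius k t ^ (3 * p) := fun r hr => by
    have hsub {z : ℝ} (hz : z ∈ Icc t r) := hs z ⟨ht.1.trans hz.1, hz.2.trans_lt hr.2⟩
    have hanti := H.antitoneOn_meanRadius hp ht0.1 hr.2
      fun z hz => (hsub hz).2.1.abs_re_fCoeff_zero_le.trans (hsub hz).2.2
    refine (hsub ⟨hr.1, le_rfl⟩).2.1.abs_re_fCoeff_zero_le.trans ?_
    have := H.meanRadius_pos (hsub ⟨hr.1, le_rfl⟩).1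
    gcongr
    exact hanti ⟨le_rfl, hr.1⟩ ⟨hr.1, le_rfl⟩ hr.1
  have hpow := H.abs_meanRadius_pow_sub_le hp hcol.tendsto_meanRadius ht0 hmean
  refine (abs_sub_one_le_abs_pow_sub_one (div_pos hR hΛ).le p.succ_ne_zero).trans ?_
  rwa [div_pow, div_sub_one (pow_pos hΛ _).ne', abs_div, abs_of_pos (pow_pos hΛ _),
    div_le_iff₀ (pow_pos hΛ _), shrinkingRadius_pow ht.2.le]

end IsPCSF

/-! ### Convergence of the normalized curvature -/

/-- The deviation from `1` of the normalized curvature, at time `t` of the flow. -/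
noncomputable def normalizedDev (p : ℕ) (T : ℝ) (k : ℝ → ℝ → ℝ) (t : ℝ) : ℝ → ℝ :=
  shrinkingRadius p T t • flip k t - 1

theorem ClNorm_le_of_fourierBound {l : ℕ} {f : ℝ → ℝ} {A : ℝ} (hf : SmoothPeriodic f)
    (h : FourierBound (l + 2) f A) : ClNorm l f ≤ A * weightSum := by
  have : Nonempty (Icc 0 (2 * π)) := ⟨⟨0, le_rfl, two_pi_pos.le⟩⟩
  refine ciSup_le fun j => ciSup_le fun x => ?_
  exact FourierBound.abs_apply_le (hf.iteratedDeriv j)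
    (.iteratedDeriv hf (h.of_le (by have := j.2; lia))) x

namespace IsPCSF

variable {p m : ℕ} {T : ℝ} {k : ℝ → ℝ → ℝ} {ψ : ℝ → ℝ} {t : ℝ}

theorem smoothPeriodic_normalizedDev (H : IsPCSF p T k ψ) (ht : t ∈ Ico 0 T) :
    SmoothPeriodic (normalizedDev p T k t) :=
  ((H.jointlySmooth_curv.smoothPeriodic ht).const_smul _).sub .one

theorem normalizedDev_eq (H : IsPCSF p T k ψ) (ht : t ∈ Ico 0 T) :
    normalizedDev p T k t = (shrinkingRadius p T t / meanRadius k t) • curvDev k t +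
      (shrinkingRadius p T t / meanRadius k t - 1) • 1 := by
  rw [normalizedDev, curvDev, smul_sub, smul_smul, div_mul_cancel₀ _ (H.meanRadius_pos ht).ne',
    sub_smul, one_smul]
  abel

theorem exists_eventually_fourierBound_normalizedDev (hp : 1 ≤ p) (H : IsPCSF p T k ψ)
    (hcol : RoundCollapse p T k) (hm : 2 ≤ m) : ∃ C, ∀ᶠ t in 𝓝[<] T,
      FourierBound m (normalizedDev p T k t) (C * shrinkingRadius p T t ^ (3 * p - 1)) := by
  obtain ⟨A, hA⟩ := SmoothPeriodic.one.exists_fourierBound m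
  obtain ⟨E, hE⟩ := H.exists_eventually_fourierBound_curvDev hp hcol hm
  obtain ⟨C, hC, hratio⟩ := H.exists_eventually_abs_meanRadius_div_sub_one_le hp hcol
  refine ⟨2 * (E + C * A) * 2 ^ (3 * p - 1), ?_⟩
  filter_upwards [hcol.eventually_mem, hE, hratio, hcol.eventually_mul_pow_le 1 le_rfl one_pos,
    hcol.eventually_mul_pow_le C (j := 3 * p) (by lia) one_half_pos] with t ht hE hratio hone hhalf
  have hR := H.meanRadius_pos ht
  have hΛ := shrinkingRadius_pos hp ht.2
  have hinv := abs_div_sub_one_le_of_abs_div_sub_one_le hR hΛ hhalf hratio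
  have hRΛ : meanRadius k t ≤ 2 * shrinkingRadius p T t :=
    (div_le_iff₀ hΛ).1 (by linarith [(abs_le.1 hratio).2])
  have hpow : meanRadius k t ^ (3 * p) ≤ meanRadius k t ^ (3 * p - 1) :=
    pow_le_pow_of_le_one hR.le (by simpa using hone) (Nat.sub_le _ _)
  have hE0 : 0 ≤ E := nonneg_of_mul_nonneg_left hE.nonneg (pow_pos hR _)
  have hA0 := hA.nonneg
  set X := shrinkingRadius p T t / meanRadius k t
  have hX : |X| ≤ 2 := abs_le.2 ⟨by linarith [(abs_le.1 hinv).1], by linarith [(abs_le.1 hinv).2]⟩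
  rw [H.normalizedDev_eq ht]
  refine ((hE.const_smul X).add ((H.smoothPeriodic_curvDev ht).const_smul _).continuous
    (SmoothPeriodic.one.const_smul _).continuous (hA.const_smul (X - 1))).mono ?_
  calc |X| * (E * meanRadius k t ^ (3 * p - 1)) + |X - 1| * A
      ≤ 2 * (E * meanRadius k t ^ (3 * p - 1)) +
          2 * (C * meanRadius k t ^ (3 * p - 1)) * A := by
        gcongr
        exact hinv.trans (by gcongr)
    _ = 2 * (E + C * A) * meanRadius k t ^ (3 * p - 1) := by ring
    _ ≤ 2 * (E + C * A) * (2 * shrinkingRadius p T t) ^ (3 * p - 1) := by gcongr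
    _ = 2 * (E + C * A) * 2 ^ (3 * p - 1) * shrinkingRadius p T t ^ (3 * p - 1) := by
        rw [mul_pow, ← mul_assoc]

theorem exists_fourierBound_normalizedDev_of_lt (hp : 1 ≤ p) (H : IsPCSF p T k ψ) (m : ℕ) {s : ℝ}
    (hs : s < T) : ∃ C, ∀ t ∈ Icc 0 s,
      FourierBound m (normalizedDev p T k t) (C * shrinkingRadius p T t ^ (3 * p - 1)) := by
  obtain ⟨A, hA⟩ := SmoothPeriodic.one.exists_fourierBound m
  obtain ⟨B, hB⟩ := H.jointlySmooth_curv.exists_fourierBound m hs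
  have hΛs := shrinkingRadius_pos hp hs
  refine ⟨(shrinkingRadius p T 0 * B + A) / shrinkingRadius p T s ^ (3 * p - 1), fun t ht => ?_⟩
  have htT : t ∈ Ico 0 T := ⟨ht.1, ht.2.trans_lt hs⟩
  have hk := H.jointlySmooth_curv.smoothPeriodic htT
  have hB0 := (hB t ht).nonneg
  have hA0 := hA.nonneg
  have hΛ := shrinkingRadius_pos hp htT.2
  have hΛ0 : shrinkingRadius p T t ≤ shrinkingRadius p T 0 :=
    shrinkingRadius_anti ht.1 htT.2.le
  rw [normalizedDev, sub_eq_add_neg, ← neg_one_smul ℝ (1 : ℝ → ℝ)]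
  refine (((hB t ht).const_smul _).add (hk.const_smul _).continuous
    (SmoothPeriodic.one.const_smul _).continuous (hA.const_smul (-1))).mono ?_
  rw [abs_of_pos hΛ, abs_neg, abs_one, one_mul, div_mul_eq_mul_div, le_div_iff₀ (by positivity)]
  have hM : 0 ≤ shrinkingRadius p T 0 * B + A :=
    add_nonneg (mul_nonneg (hΛ.le.trans hΛ0) hB0) hA0
  gcongr
  exact shrinkingRadius_anti ht.2 hs.le

theorem exists_fourierBound_normalizedDev (hp : 1 ≤ p) (H : IsPCSF p T k ψ)
    (hcol : RoundCollapse p T k) (hm : 2 ≤ m) : ∃ C > 0, ∀ t ∈ Ico 0 T,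
      FourierBound m (normalizedDev p T k t) (C * shrinkingRadius p T t ^ (3 * p - 1)) := by
  obtain ⟨C₁, hlate⟩ := H.exists_eventually_fourierBound_normalizedDev hp hcol hm
  obtain ⟨s, hsT, hlate⟩ := exists_forall_Ico_of_eventually_nhdsLT hlate
  obtain ⟨C₂, hearly⟩ := H.exists_fourierBound_normalizedDev_of_lt hp m hsT
  refine ⟨max 1 (max C₁ C₂), by positivity, fun t ht => ?_⟩
  have := shrinkingRadius_pos hp ht.2
  rcases le_total s t with hst | hts
  · exact (hlate t ⟨hst, ht.2⟩).mono (by gcongr; simp)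
  · exact (hearly t ⟨ht.1, hts⟩).mono (by gcongr; simp)

end IsPCSF

/-! ### Smallness of the initial deviation -/

theorem sq_mul_norm_fCoeff_le_seminorm2 {f : ℝ → ℝ} (hf : SmoothPeriodic f) (n : ℤ) :
    (n : ℝ) ^ 2 * ‖fCoeff f n‖ ≤ 2 * seminorm2 f := by
  obtain ⟨A, hA⟩ := hf.exists_fourierBound 2
  have hbdd {z : ℤ → ℝ} (hz : ∀ n, |z n| ≤ ‖fCoeff f n‖) :
      BddAbove (range fun n : ℤ => (n : ℝ) ^ 2 * |z n|) :=
    ⟨A, forall_mem_range.2 fun n => le_trans (by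
      rw [← sq_abs (n : ℝ)]
      gcongr
      exacts [le_max_right _ _, hz n]) (hA n)⟩
  have hre : (n : ℝ) ^ 2 * |(fCoeff f n).re| ≤ seminorm2 f :=
    (le_ciSup (hbdd fun n => Complex.abs_re_le_norm (fCoeff f n)) n).trans (le_max_left _ _)
  have him : (n : ℝ) ^ 2 * |(fCoeff f n).im| ≤ seminorm2 f :=
    (le_ciSup (hbdd fun n => Complex.abs_im_le_norm (fCoeff f n)) n).trans (le_max_right _ _)
  calc (n : ℝ) ^ 2 * ‖fCoeff f n‖ ≤ (n : ℝ) ^ 2 * (|(fCoeff f n).re| + |(fCoeff f n).im|) := by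
        gcongr
        exact Complex.norm_le_abs_re_add_abs_im _
    _ ≤ 2 * seminorm2 f := by linarith

theorem fourierBound_of_seminorm2_le {f : ℝ → ℝ} (hf : SmoothPeriodic f)
    (hpos : 0 < (fCoeff f 0).re) {a : ℝ} (ha : 0 ≤ a)
    (h : 2 * seminorm2 f ≤ (fCoeff f 0).re * a) :
    FourierBound 2 ((fCoeff f 0).re⁻¹ • f - 1) a := fun n => by
  rw [fCoeff_sub (hf.const_smul _).continuous SmoothPeriodic.one.continuous, fCoeff_const_smul]
  rcases eq_or_ne n 0 with rfl | hn
  · have hreal : fCoeff f 0 = ((fCoeff f 0).re : ℂ) := by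
      rw [fCoeff_zero, Complex.ofReal_re]
    have hne : ((fCoeff f 0).re : ℂ) ≠ 0 := by exact_mod_cast hpos.ne'
    rw [fCoeff_one_zero, Complex.ofReal_inv, inv_mul_eq_div, (div_eq_one_iff_eq hne).2 hreal,
      sub_self, norm_zero, mul_zero]
    exact ha
  · rw [fCoeff_one_of_ne_zero hn, sub_zero, norm_mul, Complex.norm_of_nonneg (inv_pos.2 hpos).le,
      freqWeight_of_ne_zero hn, sq_abs, mul_left_comm, inv_mul_le_iff₀ hpos]
    exact (sq_mul_norm_fCoeff_le_seminorm2 hf n).trans h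

namespace IsPCSF

variable {p m : ℕ} {T : ℝ} {k : ℝ → ℝ → ℝ} {ψ : ℝ → ℝ} {t : ℝ}

theorem fourierBound_radiusDev_of_smul_sub_one (H : IsPCSF p T k ψ) (ht : t ∈ Ico 0 T) {c b : ℝ}
    (hc : 0 < c) (hb : b ≤ 1 / 2) (h : FourierBound m (c • radius k t - 1) b) :
    FourierBound m (radiusDev k t) (2 * b) := fun n => by
  have hR := H.meanRadius_pos ht
  have hcont := (H.jointlySmooth_radius.smoothPeriodic ht).continuous
  have hcoeff (n : ℤ) : fCoeff (c • radius k t - 1) n = c * fCoeff (radius k t) n - fCoeff 1 n := by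
    rw [fCoeff_sub (hcont.const_smul c) continuous_one, fCoeff_const_smul]
  rcases eq_or_ne n 0 with rfl | hn
  · rw [H.fCoeff_radiusDev_zero ht, norm_zero, mul_zero]
    exact mul_nonneg zero_le_two h.nonneg
  have hcR : 1 / 2 ≤ c * meanRadius k t := by
    have hmean := h.abs_re_fCoeff_zero_le
    rw [hcoeff, fCoeff_one_zero, Complex.sub_re, Complex.re_ofReal_mul, Complex.one_re] at hmean
    rw [meanRadius]
    linarith [(abs_le.1 hmean).1]
  have hbn := h n
  rw [hcoeff, fCoeff_one_of_ne_zero hn, sub_zero, H.fCoeff_radius ht hn, ← mul_assoc,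
    ← Complex.ofReal_mul, norm_mul, Complex.norm_of_nonneg (mul_pos hc hR).le] at hbn
  have := mul_nonneg (pow_nonneg (freqWeight_pos n).le m) (norm_nonneg (fCoeff (radiusDev k t) n))
  nlinarith

theorem fourierBound_radiusDev_zero (H : IsPCSF p T k ψ) (hT : 0 < T) {a : ℝ} (ha : 0 < a)
    (hsmall : 4 * convConst 2 * a ≤ 1) (hψ : 2 / a * seminorm2 ψ ≤ (fCoeff ψ 0).re) :
    FourierBound 2 (radiusDev k 0) (4 * a) := by
  have h0 : (0 : ℝ) ∈ Ico 0 T := ⟨le_rfl, hT⟩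
  have hk : flip k 0 = ψ := funext H.2.2.2.2.1
  have hsmooth := H.jointlySmooth_curv.smoothPeriodic h0
  have hradius := H.jointlySmooth_radius.smoothPeriodic h0
  have hmean : 0 < (fCoeff ψ 0).re := by
    rw [← hk, fCoeff_zero, Complex.ofReal_re]
    exact mul_pos (by positivity) (intervalIntegral.intervalIntegral_pos_of_pos_on
      (hsmooth.continuous.intervalIntegrable _ _) (fun x _ => H.curv_pos h0 x) two_pi_pos)
  rw [hk] at hsmooth
  have hcurv := fourierBound_of_seminorm2_le hsmooth hmean ha.le
    (by rwa [div_mul_eq_mul_div, div_le_iff₀ ha] at hψ)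
  set K := (fCoeff ψ 0).re
  have hinv : (1 + (K⁻¹ • ψ - 1)) * (1 + (K • radius k 0 - 1)) = 1 := by
    ext x
    have := (H.curv_pos h0 x).ne'
    rw [← hk, radius]
    simp [flip, mul_mul_mul_comm, hmean.ne', this]
  have hradiusBound := FourierBound.inverse ((hsmooth.const_smul _).sub .one)
    ((hradius.const_smul K).sub .one) hinv hcurv hsmall
  exact (H.fourierBound_radiusDev_of_smul_sub_one h0 hmean
    (by nlinarith [one_le_convConst 2]) hradiusBound).mono (by linarith)

theorem roundCollapse_of_fourierBound (hp : 1 ≤ p) (H : IsPCSF p T k ψ) (hT : 0 < T) {c ε : ℝ}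
    (hc : c < ε) (hsmall : 4 * convConst 2 * ε ≤ 1)
    (hforcing : ∀ t ∈ Ico 0 T, ∀ A, TameBound 2 (radiusDev k t) ε A →
      TameBound 2 (forcing p k t) (1 / 20) (1 / 20 * A))
    (hinit : FourierBound 2 (radiusDev k 0) c) : RoundCollapse p T k := by
  have hdev := H.fourierBound_radiusDev_of_initial hp hc hforcing hinit
  have hcurv : ∀ t ∈ Ico 0 T, ∀ θ, curvDev k t θ ≤ 2 * ε * weightSum := fun t ht θ =>
    (le_abs_self _).trans (FourierBound.abs_apply_le (H.smoothPeriodic_curvDev ht)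
      (FourierBound.inverse (H.smoothPeriodic_radiusDev ht) (H.smoothPeriodic_curvDev ht)
        (H.one_add_radiusDev_mul_one_add_curvDev ht) ((hdev t ht).mono hc.le) hsmall) θ)
  refine ⟨hT, H.tendsto_meanRadius hT hcurv, c / meanRadius k 0 ^ (3 / 2 * p : ℝ), ?_⟩
  filter_upwards [Ico_mem_nhdsLT hT] with t ht
  have hdecay := H.fourierBound_radiusDev_decay hp le_rfl ht.2 (fun s hs A hA =>
    have hs : s ∈ Ico 0 T := ⟨hs.1, hs.2.trans_lt ht.2⟩
    hforcing s hs A ⟨(hdev s hs).mono hc.le, hA⟩) hinit t ⟨ht.1, le_rfl⟩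
  rwa [div_rpow (H.meanRadius_pos ht).le (H.meanRadius_pos ⟨le_rfl, hT⟩).le, ← mul_div_assoc,
    mul_div_right_comm] at hdecay

end IsPCSF

theorem exists_roundCollapse_of_seminorm2_le {p : ℕ} (hp : 1 ≤ p) :
    ∃ c > (0 : ℝ), ∀ {T : ℝ} {k : ℝ → ℝ → ℝ} {ψ : ℝ → ℝ}, 0 < T → IsPCSF p T k ψ →
      c * seminorm2 ψ ≤ (fCoeff ψ 0).re → RoundCollapse p T k := by
  obtain ⟨ε, hε, hsmall, hforcing⟩ := exists_tameBound_forcing le_rfl p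
  refine ⟨2 / (ε / 8), by positivity, fun hT H hψ => ?_⟩
  exact H.roundCollapse_of_fourierBound hp hT (c := 4 * (ε / 8)) (by linarith) hsmall
    (fun t ht A hA => hforcing H ht hA)
    (H.fourierBound_radiusDev_zero hT (by positivity) (by linarith) hψ)

/-- There is a constant `c_p > 0` depending only on `p` such that if
`ψ̂(0) ≥ c_p ‖ψ‖₂`, then for every `l` there is `C_{p,l} > 0` with
`‖k̃(·,τ) - 1‖_{C^l[0,2π]} ≤ C_{p,l} e^{-(3p-1)τ}` for all `τ ≥ 0`. -/
theorem statement0 (p : ℕ) (hp : 1 ≤ p) :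
    ∃ cp > (0:ℝ), ∀ (T : ℝ), 0 < T → ∀ (k : ℝ → ℝ → ℝ) (ψ : ℝ → ℝ),
      IsPCSF p T k ψ →
      cp * seminorm2 ψ ≤ (fCoeff ψ 0).re →
      ∀ l : ℕ, ∃ C > (0:ℝ), ∀ τ : ℝ, 0 ≤ τ →
        ClNorm l (fun θ => ktilde p T k θ τ - 1)
          ≤ C * Real.exp (-(3 * (p : ℝ) - 1) * τ) := by
  obtain ⟨c, hc, hcollapse⟩ := exists_roundCollapse_of_seminorm2_le hp
  refine ⟨c, hc, fun T hT k ψ H hψ l => ?_⟩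
  obtain ⟨C, hC, hdev⟩ :=
    H.exists_fourierBound_normalizedDev hp (hcollapse hT H hψ) (Nat.le_add_left 2 l)
  have hΛ := shrinkingRadius_pos hp hT
  have hweight := one_le_weightSum
  refine ⟨C * shrinkingRadius p T 0 ^ (3 * p - 1) * weightSum, by positivity, fun τ hτ => ?_⟩
  have ht := tOf_mem_Ico (p := p) hT hτ
  calc ClNorm l (normalizedDev p T k (tOf p T τ))
      ≤ C * shrinkingRadius p T (tOf p T τ) ^ (3 * p - 1) * weightSum :=
        ClNorm_le_of_fourierBound (H.smoothPeriodic_normalizedDev ht) (hdev _ ht)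
    _ = C * shrinkingRadius p T 0 ^ (3 * p - 1) * weightSum * exp (-(3 * p - 1) * τ) := by
        rw [shrinkingRadius_tOf_pow hp hT]
        ring
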